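/- There exists a constant c > 0 such that for infinitely many natural numbers n there is a simple (non-weak) pseudoline arrangement (L₁, …, Lₙ) in ℝ² with the following property: for every homeomorphism h : ℝ² → ℝ² such that each set Cᵢ := h(Lᵢ) is a C¹-smooth one-dimensional submanifold of ℝ² that is a finite union of pieces, each piece being a circular arc, a line segment, or a closed ray, there is some index i such that Cᵢ cannot be written as a union of fewer than c·n such pieces. That is, there exist simple arrangements of n pseudolines that, when represented by smooth piecewise-circular curves, require some curve to consist of Ω(n) arcs. -/

import Mathlib

open Set

/-- The Euclidean plane. -/
abbrev Plane := EuclideanSpace ℝ (Fin 2)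

/-- A straight line in the plane. -/
def IsLine (S : Set Plane) : Prop :=
  ∃ a u : Plane, u ≠ 0 ∧ S = {p | ∃ t : ℝ, p = a + t • u}

/-- A pseudoline: image of a straight line under a self-homeomorphism of the plane. -/
def IsPseudoline (L : Set Plane) : Prop :=
  ∃ (h : Plane ≃ₜ Plane) (ℓ : Set Plane), IsLine ℓ ∧ L = h '' ℓ

/-- Two curves cross at `p`: `p` lies on both, and each of them meets every
connected component of the complement of the other. -/
def CrossAt (L M : Set Plane) (p : Plane) : Prop :=
  p ∈ L ∩ M ∧
  (∀ x ∈ Mᶜ, (L ∩ connectedComponentIn Mᶜ x).Nonempty) ∧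
  (∀ x ∈ Lᶜ, (M ∩ connectedComponentIn Lᶜ x).Nonempty)

/-- A weak pseudoline arrangement: pairwise distinct pseudolines, any two of which
intersect in at most one point, and cross wherever they intersect. -/
def IsWeakArrangement {n : ℕ} (L : Fin n → Set Plane) : Prop :=
  Function.Injective L ∧
  (∀ i, IsPseudoline (L i)) ∧
  (∀ i j, i ≠ j → (L i ∩ L j).Subsingleton) ∧
  (∀ i j, i ≠ j → ∀ p ∈ L i ∩ L j, CrossAt (L i) (L j) p)

/-- A (non-weak) pseudoline arrangement: a weak arrangement in which any two
pseudolines intersect (in exactly one point, where they cross). -/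
def IsArrangement {n : ℕ} (L : Fin n → Set Plane) : Prop :=
  IsWeakArrangement L ∧ ∀ i j, i ≠ j → (L i ∩ L j).Nonempty

/-- Simplicity: no point lies on three distinct pseudolines of the family. -/
def IsSimple {n : ℕ} (L : Fin n → Set Plane) : Prop :=
  ∀ (p : Plane) (i j k : Fin n),
    p ∈ L i → p ∈ L j → p ∈ L k → i = j ∨ i = k ∨ j = k

/-- Outerplanarity: every intersection point of two pseudolines of the family lies
in the closure of some unbounded connected component of the complement of the union. -/
def IsOuterplanar {n : ℕ} (L : Fin n → Set Plane) : Prop :=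
  ∀ i j, i ≠ j → ∀ p ∈ L i ∩ L j,
    ∃ x ∈ (⋃ k, L k)ᶜ,
      ¬ Bornology.IsBounded (connectedComponentIn (⋃ k, L k)ᶜ x) ∧
      p ∈ closure (connectedComponentIn (⋃ k, L k)ᶜ x)

/-- A closed ray in the plane. -/
def IsRay (R : Set Plane) : Prop :=
  ∃ a u : Plane, u ≠ 0 ∧ R = {p | ∃ t : ℝ, 0 ≤ t ∧ p = a + t • u}

/-- A closed line segment in the plane. -/
def IsSegment (S : Set Plane) : Prop :=
  ∃ a b : Plane, S = segment ℝ a b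

/-- A circular arc: a nonempty connected subset of a circle. -/
def IsArc (A : Set Plane) : Prop :=
  ∃ (c : Plane) (r : ℝ), 0 < r ∧ A ⊆ Metric.sphere c r ∧ IsConnected A

/-- A `C¹`-smooth unbounded simple curve (a one-dimensional `C¹` submanifold of the
plane), presented as the range of an injective `C¹` immersion of `ℝ`. -/
def IsC1Curve (C : Set Plane) : Prop :=
  ∃ γ : ℝ → Plane, Function.Injective γ ∧ ContDiff ℝ 1 γ ∧
    (∀ t, deriv γ t ≠ 0) ∧ Set.range γ = C

/-- `C` can be written as a union of `m` pieces, each a circular arc, a line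
segment, or a closed ray. -/
def HasPieceDecomposition (C : Set Plane) (m : ℕ) : Prop :=
  ∃ P : Fin m → Set Plane,
    (∀ k, IsArc (P k) ∨ IsSegment (P k) ∨ IsRay (P k)) ∧ C = ⋃ k, P k


/-- The derivative of a polynomial function. -/
theorem mvp_hasFDerivAt {σ : Type} [Fintype σ] (p : MvPolynomial σ ℝ) (x : σ → ℝ) :
    HasFDerivAt (fun y : σ → ℝ => MvPolynomial.eval y p)
      (∑ j, MvPolynomial.eval x (MvPolynomial.pderiv j p) •
        (ContinuousLinearMap.proj j : (σ → ℝ) →L[ℝ] ℝ)) x := by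
  classical
  induction p using MvPolynomial.induction_on with
  | C a =>
    simp only [MvPolynomial.eval_C, MvPolynomial.pderiv_C, map_zero, zero_smul, Finset.sum_const_zero]
    exact hasFDerivAt_const _ _
  | add p q hp hq =>
    simp only [map_add, add_smul, Finset.sum_add_distrib]
    exact hp.add hq
  | mul_X p n hp =>
    have h1 : HasFDerivAt (fun y : σ → ℝ => y n) (ContinuousLinearMap.proj n : (σ → ℝ) →L[ℝ] ℝ) x :=
      (ContinuousLinearMap.proj n : (σ → ℝ) →L[ℝ] ℝ).hasFDerivAt
    have h2 := hp.mul h1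
    simp only [map_mul, MvPolynomial.eval_X]
    refine h2.congr_fderiv ?_
    ext w
    simp only [MvPolynomial.pderiv_mul, MvPolynomial.pderiv_X, map_add, map_mul, MvPolynomial.eval_X]
    simp only [add_apply, smul_apply, sum_apply, smul_eq_mul,
      ContinuousLinearMap.proj_apply, add_mul, Finset.sum_add_distrib]
    rw [add_comm]
    congr 1
    · rw [Finset.mul_sum]
      refine Finset.sum_congr rfl fun i _ => by ring
    · rw [Finset.sum_eq_single n]
      · simp
      · intro b _ hb
        simp [hb]
      · simp

theorem mvp_continuous {σ : Type} [Fintype σ] (p : MvPolynomial σ ℝ) :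
    Continuous (fun y : σ → ℝ => MvPolynomial.eval y p) :=
  MvPolynomial.continuous_eval p

/-- separating polynomials -/
theorem mvp_separate {σ B : Type} [Fintype B] (z : B → σ → ℝ)
    (hz : Function.Injective z) :
    ∃ p : B → MvPolynomial σ ℝ, (∀ a, MvPolynomial.eval (z a) (p a) = 1) ∧
      ∀ a b, a ≠ b → MvPolynomial.eval (z b) (p a) = 0 := by
  classical
  have h : ∀ a b : B, ∃ l : MvPolynomial σ ℝ, a ≠ b →
      MvPolynomial.eval (z a) l = 1 ∧ MvPolynomial.eval (z b) l = 0 := by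
    intro a b
    by_cases hab : a = b
    · exact ⟨0, fun h => (h hab).elim⟩
    · obtain ⟨i, hi⟩ := Function.ne_iff.1 (fun h => hab (hz h))
      refine ⟨MvPolynomial.C ((z a i - z b i)⁻¹) * (MvPolynomial.X i - MvPolynomial.C (z b i)),
        fun _ => ?_⟩
      simp [sub_ne_zero.2 hi]
  choose l hl using h
  refine ⟨fun a => ∏ b ∈ Finset.univ.erase a, l a b, fun a => ?_, fun a b hab => ?_⟩
  · rw [map_prod]
    exact Finset.prod_eq_one fun b hb => (hl a b (Finset.ne_of_mem_erase hb).symm).1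
  · rw [map_prod]
    exact Finset.prod_eq_zero (Finset.mem_erase.2 ⟨hab.symm, Finset.mem_univ b⟩) (hl a b hab).2

/-- Linear independence count: polynomials with small total degree. -/
theorem mvp_card_le {σ I : Type} [Fintype σ] [Fintype I] (G : I → MvPolynomial σ ℝ) (m : ℕ)
    (hG : ∀ i, (G i).totalDegree < m) (hli : LinearIndependent ℝ G) :
    Fintype.card I ≤ m ^ Fintype.card σ := by
  classical
  let Φ : MvPolynomial σ ℝ →ₗ[ℝ] ((σ → Fin m) → ℝ) :=
    { toFun := fun p e => MvPolynomial.coeff (Finsupp.equivFunOnFinite.symm fun i => (e i : ℕ)) p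
      map_add' := fun p q => by ext e; simp
      map_smul' := fun c p => by ext e; simp }
  have h2 : LinearIndependent ℝ (fun i => Φ (G i)) := by
    rw [Fintype.linearIndependent_iff] at hli ⊢
    intro c hc
    apply hli c
    have hc' : Φ (∑ i, c i • G i) = 0 := by
      rw [map_sum]; simpa using hc
    ext e
    by_cases he : ∀ i, e i < m
    · have := congrFun hc' (fun i => ⟨e i, he i⟩)
      simp only [Φ, LinearMap.coe_mk, AddHom.coe_mk] at this
      have h3 : (Finsupp.equivFunOnFinite.symm fun i => e i) = e := by ext; simp
      rw [h3] at this
      simpa using this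
    · push Not at he
      obtain ⟨i, hi⟩ := he
      rw [MvPolynomial.coeff_zero, MvPolynomial.coeff_sum]
      refine Finset.sum_eq_zero fun j _ => ?_
      rw [MvPolynomial.coeff_smul]
      have : MvPolynomial.coeff e (G j) = 0 := by
        by_contra hne
        have := MvPolynomial.le_totalDegree (MvPolynomial.mem_support_iff.2 hne)
        have h4 : e i ≤ e.sum fun _ a => a := by
          by_cases h0 : e i = 0
          · omega
          · exact Finset.single_le_sum (f := fun i => e i) (fun _ _ => Nat.zero_le _) (Finsupp.mem_support_iff.2 h0)
        have := hG j
        omega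
      simp [this]
  have := h2.fintype_card_le_finrank
  simpa using this


theorem mvp_indep {σ B : Type} [Fintype σ] [Fintype B] (g : σ → MvPolynomial σ ℝ)
    (z : B → σ → ℝ) (hg0 : ∀ b i, MvPolynomial.eval (z b) (g i) = 0)
    (hnd : ∀ b, ∀ y : σ → ℝ, ∃ w : σ → ℝ, ∀ i,
      ∑ j, MvPolynomial.eval (z b) (MvPolynomial.pderiv j (g i)) * w j = y i)
    (p : B → MvPolynomial σ ℝ) (hp1 : ∀ a, MvPolynomial.eval (z a) (p a) = 1)
    (hp0 : ∀ a b, a ≠ b → MvPolynomial.eval (z b) (p a) = 0) (T : ℕ) :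
    LinearIndependent ℝ (fun x : (σ → Fin T) × B => (∏ i, g i ^ (x.1 i : ℕ)) * p x.2) := by
  classical
  rw [Fintype.linearIndependent_iff]
  intro c hc
  by_contra hne
  push Not at hne
  obtain ⟨⟨α0, b⟩, hmem, hmin⟩ := Finset.exists_min_image
    (Finset.univ.filter fun x : (σ → Fin T) × B => c x ≠ 0) (fun x => ∑ i, (x.1 i : ℕ))
    (by obtain ⟨x, hx⟩ := hne; exact ⟨x, by simpa using hx⟩)
  simp only [Finset.mem_filter, Finset.mem_univ, true_and] at hmem hmin
  set d := ∑ i, (α0 i : ℕ) with hd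
  -- key vanishing
  have key : ∀ y : σ → ℝ, ∑ x : (σ → Fin T) × B,
      c x * ((∏ i, y i ^ (x.1 i : ℕ)) * 0 ^ ((∑ i, (x.1 i : ℕ)) - d) *
        MvPolynomial.eval (z b) (p x.2)) = 0 := by
    intro y
    obtain ⟨w, hw⟩ := hnd b y
    let H : ℝ → ℝ := fun τ => ∑ x : (σ → Fin T) × B,
      c x * ((∏ i, (τ⁻¹ * MvPolynomial.eval (z b + τ • w) (g i)) ^ (x.1 i : ℕ)) *
        τ ^ ((∑ i, (x.1 i : ℕ)) - d) * MvPolynomial.eval (z b + τ • w) (p x.2))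
    have hcont : Continuous fun τ : ℝ => z b + τ • w := by fun_prop
    have hs : ∀ i, Filter.Tendsto (fun τ : ℝ => τ⁻¹ * MvPolynomial.eval (z b + τ • w) (g i))
        (nhdsWithin 0 {0}ᶜ) (nhds (y i)) := by
      intro i
      have h1 : HasDerivAt (fun τ : ℝ => z b + τ • w) w 0 := by
        simpa using ((hasDerivAt_id (0:ℝ)).smul_const w).const_add (z b)
      have h2 := mvp_hasFDerivAt (g i) (z b + (0:ℝ) • w)
      have h3 := h2.comp_hasDerivAt (0:ℝ) h1
      rw [hasDerivAt_iff_tendsto_slope] at h3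
      have h4 : (∑ j, MvPolynomial.eval (z b + (0:ℝ) • w) (MvPolynomial.pderiv j (g i)) •
        (ContinuousLinearMap.proj j : (σ → ℝ) →L[ℝ] ℝ)) w = y i := by
        rw [← hw i]
        simp [sum_apply]
      rw [h4] at h3
      refine h3.congr' (Filter.Eventually.of_forall fun τ => ?_)
      simp [slope, hg0 b i]
    have hlim : Filter.Tendsto H (nhdsWithin 0 {0}ᶜ) (nhds (∑ x : (σ → Fin T) × B,
      c x * ((∏ i, y i ^ (x.1 i : ℕ)) * 0 ^ ((∑ i, (x.1 i : ℕ)) - d) *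
        MvPolynomial.eval (z b) (p x.2)))) := by
      refine tendsto_finsetSum _ fun x _ => ?_
      refine Filter.Tendsto.const_mul _ ?_
      refine Filter.Tendsto.mul (Filter.Tendsto.mul ?_ ?_) ?_
      · exact tendsto_finsetProd _ fun i _ => (hs i).pow _
      · have : Continuous fun τ : ℝ => τ ^ ((∑ i, (x.1 i : ℕ)) - d) := by fun_prop
        exact (this.tendsto 0).mono_left nhdsWithin_le_nhds
      · have : Continuous fun τ : ℝ => MvPolynomial.eval (z b + τ • w) (p x.2) :=
          (mvp_continuous (p x.2)).comp hcont
        have h := (this.tendsto 0).mono_left (nhdsWithin_le_nhds (s := {0}ᶜ))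
        simpa using h
    have hzero : ∀ᶠ τ in nhdsWithin (0:ℝ) {0}ᶜ, H τ = 0 := by
      filter_upwards [self_mem_nhdsWithin] with τ hτ
      have hτ0 : τ ≠ 0 := hτ
      have h1 : τ ^ d * H τ = 0 := by
        have h2 := congrArg (MvPolynomial.eval (z b + τ • w)) hc
        rw [map_sum, map_zero] at h2
        rw [← h2, Finset.mul_sum]
        refine Finset.sum_congr rfl fun x _ => ?_
        by_cases hx : c x = 0
        · simp [hx]
        · have h3 := hmin x hx
          simp only [MvPolynomial.smul_eval, map_mul, map_prod, map_pow]
          have h4 : ∏ i, MvPolynomial.eval (z b + τ • w) (g i) ^ (x.1 i : ℕ) =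
              τ ^ (∑ i, (x.1 i : ℕ)) * ∏ i, (τ⁻¹ * MvPolynomial.eval (z b + τ • w) (g i)) ^ (x.1 i : ℕ) := by
            rw [← Finset.prod_pow_eq_pow_sum, ← Finset.prod_mul_distrib]
            refine Finset.prod_congr rfl fun i _ => ?_
            rw [← mul_pow, ← mul_assoc, mul_inv_cancel₀ hτ0, one_mul]
          rw [h4]
          have h5 : τ ^ (∑ i, (x.1 i : ℕ)) = τ ^ d * τ ^ ((∑ i, (x.1 i : ℕ)) - d) := by
            rw [← pow_add]; congr 1; omega
          rw [h5]; ring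
      exact (mul_eq_zero.1 h1).resolve_left (pow_ne_zero _ hτ0)
    exact tendsto_nhds_unique (hlim.congr' hzero) tendsto_const_nhds |>.symm ▸ rfl
  -- polynomial identity
  let R : MvPolynomial σ ℝ := ∑ α : σ → Fin T,
    MvPolynomial.monomial (Finsupp.equivFunOnFinite.symm fun i => (α i : ℕ))
      (c (α, b) * 0 ^ ((∑ i, (α i : ℕ)) - d))
  have hR : R = 0 := by
    apply MvPolynomial.funext
    intro y
    rw [map_zero, ← key y, Fintype.sum_prod_type]
    simp only [R, map_sum]
    refine Finset.sum_congr rfl fun α _ => ?_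
    rw [Finset.sum_eq_single b]
    · rw [hp1, MvPolynomial.eval_monomial, Finsupp.prod_fintype]
      · simp; ring
      · simp
    · intro a _ hab
      rw [hp0 a b hab]; simp
    · simp
  have h6 := congrArg (MvPolynomial.coeff (Finsupp.equivFunOnFinite.symm fun i => (α0 i : ℕ))) hR
  simp only [R, MvPolynomial.coeff_sum, MvPolynomial.coeff_monomial, MvPolynomial.coeff_zero] at h6
  rw [Finset.sum_eq_single α0] at h6
  · simp [← hd] at h6
    exact hmem h6
  · intro α _ hα
    rw [if_neg]
    intro h
    apply hα
    funext i
    have := congrFun (Finsupp.equivFunOnFinite.symm.injective h) i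
    exact Fin.ext this
  · simp

theorem mvp_bezout {σ B : Type} [Fintype σ] [Fintype B] (g : σ → MvPolynomial σ ℝ) (E : ℕ)
    (hE : ∀ i, (g i).totalDegree ≤ E)
    (z : B → σ → ℝ) (hz : Function.Injective z) (hg0 : ∀ b i, MvPolynomial.eval (z b) (g i) = 0)
    (hnd : ∀ b, ∀ y : σ → ℝ, ∃ w : σ → ℝ, ∀ i,
      ∑ j, MvPolynomial.eval (z b) (MvPolynomial.pderiv j (g i)) * w j = y i) :
    Fintype.card B ≤ (Fintype.card σ * E + 1) ^ Fintype.card σ := by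
  classical
  obtain ⟨p, hp1, hp0⟩ := mvp_separate z hz
  set K := Finset.univ.sup fun b => (p b).totalDegree with hK
  have hKle : ∀ b, (p b).totalDegree ≤ K := fun b =>
    Finset.le_sup (f := fun b => (p b).totalDegree) (Finset.mem_univ b)
  have h := mvp_card_le _ ((K + 1) * (Fintype.card σ * E + 1)) ?_
    (mvp_indep g z hg0 hnd p hp1 hp0 (K + 1))
  · rw [Fintype.card_prod, Fintype.card_fun, Fintype.card_fin, mul_pow] at h
    exact Nat.le_of_mul_le_mul_left h (by positivity)
  · intro x
    have h1 := MvPolynomial.totalDegree_mul (∏ i, g i ^ (x.1 i : ℕ)) (p x.2)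
    have h2 := MvPolynomial.totalDegree_finsetProd Finset.univ (fun i => g i ^ (x.1 i : ℕ))
    have h3 : ∑ i, (g i ^ (x.1 i : ℕ)).totalDegree ≤ ∑ i : σ, K * E := by
      refine Finset.sum_le_sum fun i _ => ?_
      refine (MvPolynomial.totalDegree_pow _ _).trans ?_
      have := (x.1 i).2
      exact Nat.mul_le_mul (by omega) (hE i)
    have h4 := hKle x.2
    simp only [Finset.sum_const, Finset.card_univ, smul_eq_mul] at h3
    have h5 : (K + 1) * (Fintype.card σ * E + 1) =
      Fintype.card σ * (K * E) + K + Fintype.card σ * E + 1 := by ring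
    rw [h5]
    calc _ ≤ _ := h1
      _ < _ := by omega


theorem mvp_totalDegree_pderiv {σ : Type} (i : σ) (p : MvPolynomial σ ℝ) :
    (MvPolynomial.pderiv i p).totalDegree ≤ p.totalDegree := by
  classical
  unfold MvPolynomial.totalDegree
  refine Finset.sup_le fun m hm => ?_
  rw [MvPolynomial.mem_support_iff, MvPolynomial.coeff_pderiv] at hm
  have h1 : MvPolynomial.coeff (m + Finsupp.single i 1) p ≠ 0 := fun h => hm (by simp [h])
  have h2 := MvPolynomial.le_totalDegree (MvPolynomial.mem_support_iff.2 h1)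
  rw [Finsupp.sum_add_index' (by simp) (by simp)] at h2
  unfold MvPolynomial.totalDegree at h2
  omega

/-- Existence of a critical point. -/
theorem warren_crit {σ J : Type} [Fintype σ] [Fintype J] (f : J → MvPolynomial σ ℝ)
    (q F : MvPolynomial σ ℝ) (hF : F = q * ∏ j, f j)
    (hq : Bornology.IsBounded {y : σ → ℝ | 0 ≤ MvPolynomial.eval y q})
    (x : σ → ℝ) (hqx : 0 < MvPolynomial.eval x q) (hx : ∀ j, MvPolynomial.eval x (f j) ≠ 0)
    (v : σ → ℝ) :
    ∃ z : σ → ℝ, MvPolynomial.eval z F ≠ 0 ∧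
      (∀ j, 0 < MvPolynomial.eval z (f j) * MvPolynomial.eval x (f j)) ∧
      ∀ i, MvPolynomial.eval z (MvPolynomial.pderiv i F) + v i * MvPolynomial.eval z F = 0 := by
  classical
  let K : Set (σ → ℝ) := {y | 0 ≤ MvPolynomial.eval y q} ∩
    ⋂ j, {y | 0 ≤ MvPolynomial.eval y (f j) * MvPolynomial.eval x (f j)}
  let U : Set (σ → ℝ) := {y | 0 < MvPolynomial.eval y q} ∩
    ⋂ j, {y | 0 < MvPolynomial.eval y (f j) * MvPolynomial.eval x (f j)}
  have hKc : IsClosed K := by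
    refine (isClosed_le continuous_const (mvp_continuous q)).inter (isClosed_iInter fun j => ?_)
    exact isClosed_le continuous_const ((mvp_continuous (f j)).mul continuous_const)
  have hUo : IsOpen U := by
    refine (isOpen_lt continuous_const (mvp_continuous q)).inter (isOpen_iInter_of_finite fun j => ?_)
    exact isOpen_lt continuous_const ((mvp_continuous (f j)).mul continuous_const)
  have hK : IsCompact K := Metric.isCompact_of_isClosed_isBounded hKc (hq.subset inter_subset_left)
  have hUK : U ⊆ K := by
    rintro y ⟨h1, h2⟩
    have h1' : 0 < MvPolynomial.eval y q := h1
    refine ⟨h1'.le, mem_iInter.2 fun j => ?_⟩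
    have h3 : 0 < MvPolynomial.eval y (f j) * MvPolynomial.eval x (f j) := mem_iInter.1 h2 j
    exact h3.le
  have hxU : x ∈ U := ⟨hqx, mem_iInter.2 fun j => by
    simpa using mul_self_pos.2 (hx j)⟩
  have hFe : ∀ y, MvPolynomial.eval y F = MvPolynomial.eval y q * ∏ j, MvPolynomial.eval y (f j) := by
    intro y; rw [hF, map_mul, map_prod]
  let l : (σ → ℝ) →L[ℝ] ℝ := ∑ i, v i • (ContinuousLinearMap.proj i : (σ → ℝ) →L[ℝ] ℝ)
  let G : (σ → ℝ) → ℝ := fun y => MvPolynomial.eval y F ^ 2 * Real.exp (2 * l y)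
  have hGc : Continuous G := ((mvp_continuous F).pow 2).mul
    (Real.continuous_exp.comp (continuous_const.mul l.continuous))
  obtain ⟨z, hzK, hzmax⟩ := hK.exists_isMaxOn ⟨x, hUK hxU⟩ hGc.continuousOn
  have hFx : MvPolynomial.eval x F ≠ 0 := by
    rw [hFe]
    exact mul_ne_zero hqx.ne' (Finset.prod_ne_zero_iff.2 fun j _ => hx j)
  have hFz : MvPolynomial.eval z F ≠ 0 := by
    intro h0
    have h1 : G x ≤ G z := hzmax (hUK hxU)
    have h2 : 0 < G x := by positivity
    have h3 : G z = 0 := by simp [G, h0]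
    linarith
  have hne := hFz
  rw [hFe] at hne
  have hqz : MvPolynomial.eval z q ≠ 0 := left_ne_zero_of_mul hne
  have hfz : ∀ j, MvPolynomial.eval z (f j) ≠ 0 := fun j =>
    Finset.prod_ne_zero_iff.1 (right_ne_zero_of_mul hne) j (Finset.mem_univ j)
  have hpos : ∀ j, 0 < MvPolynomial.eval z (f j) * MvPolynomial.eval x (f j) := fun j =>
    lt_of_le_of_ne (mem_iInter.1 hzK.2 j) (mul_ne_zero (hfz j) (hx j)).symm
  have hzU : z ∈ U := ⟨lt_of_le_of_ne hzK.1 hqz.symm, mem_iInter.2 hpos⟩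
  refine ⟨z, hFz, hpos, fun i => ?_⟩
  have hloc : IsLocalMax G z := by
    filter_upwards [hUo.mem_nhds hzU] with y hy
    exact hzmax (hUK hy)
  have hd := ((mvp_hasFDerivAt F z).pow 2).mul ((l.hasFDerivAt (x := z)).const_mul 2).exp
  have h0 := hloc.hasFDerivAt_eq_zero hd
  have h1 := congrArg (fun A : (σ → ℝ) →L[ℝ] ℝ => A (Pi.single i 1)) h0
  simp [sum_apply, l, Pi.single_apply] at h1
  have h2 : Real.exp (2 * ∑ i, v i * z i) ≠ 0 := (Real.exp_pos _).ne'
  have h3 : (2 * MvPolynomial.eval z F * Real.exp (2 * ∑ i, v i * z i)) *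
    (MvPolynomial.eval z (MvPolynomial.pderiv i F) + v i * MvPolynomial.eval z F) = 0 := by
    linear_combination h1
  exact (mul_eq_zero.1 h3).resolve_left (by positivity)

/-- A weak form of the theorem of Warren. -/
theorem warren_strict {σ B J : Type} [Fintype σ] [Fintype B] [Fintype J]
    (f : J → MvPolynomial σ ℝ) (D : ℕ) (hD : ∀ j, (f j).totalDegree ≤ D)
    (x : B → σ → ℝ) (hx : ∀ b j, MvPolynomial.eval (x b) (f j) ≠ 0)
    (hsep : ∀ b b', b ≠ b' → ∃ j,
      MvPolynomial.eval (x b) (f j) * MvPolynomial.eval (x b') (f j) < 0) :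
    Fintype.card B ≤
      (Fintype.card σ * (Fintype.card J * D + 2) + 1) ^ Fintype.card σ := by
  classical
  let ρ : ℝ := ∑ b, ∑ i, x b i ^ 2 + 1
  let q : MvPolynomial σ ℝ := MvPolynomial.C ρ - ∑ i, MvPolynomial.X i ^ 2
  have hqe : ∀ y, MvPolynomial.eval y q = ρ - ∑ i, y i ^ 2 := by intro y; simp [q]
  have hqd : q.totalDegree ≤ 2 := by
    refine (MvPolynomial.totalDegree_sub _ _).trans (max_le (by simp) ?_)
    refine MvPolynomial.totalDegree_finsetSum_le fun i _ => ?_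
    refine (MvPolynomial.totalDegree_pow _ _).trans (by simp)
  have hq : Bornology.IsBounded {y : σ → ℝ | 0 ≤ MvPolynomial.eval y q} := by
    refine (Metric.isBounded_closedBall (x := (0 : σ → ℝ)) (r := ρ)).subset ?_
    intro y hy
    rw [mem_setOf_eq, hqe] at hy
    have hρ : 1 ≤ ρ := by
      have : 0 ≤ ∑ b, ∑ i, x b i ^ 2 := by positivity
      simp only [ρ]; linarith
    rw [mem_closedBall_zero_iff, pi_norm_le_iff_of_nonneg (by linarith)]
    intro i
    have h1 : y i ^ 2 ≤ ∑ i, y i ^ 2 :=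
      Finset.single_le_sum (f := fun i => y i ^ 2) (fun _ _ => sq_nonneg _) (Finset.mem_univ i)
    rw [Real.norm_eq_abs]
    apply abs_le_of_sq_le_sq _ (by linarith)
    nlinarith
  have hqx : ∀ b, 0 < MvPolynomial.eval (x b) q := by
    intro b
    rw [hqe]
    have h1 : ∑ i, x b i ^ 2 ≤ ∑ b, ∑ i, x b i ^ 2 :=
      Finset.single_le_sum (f := fun b => ∑ i, x b i ^ 2)
        (fun _ _ => Finset.sum_nonneg fun _ _ => sq_nonneg _) (Finset.mem_univ b)
    simp only [ρ]; linarith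
  let F := q * ∏ j, f j
  have hFd : F.totalDegree ≤ Fintype.card J * D + 2 := by
    refine (MvPolynomial.totalDegree_mul _ _).trans ?_
    have h1 : (∏ j, f j).totalDegree ≤ ∑ j, (f j).totalDegree :=
      MvPolynomial.totalDegree_finsetProd Finset.univ f
    have h2 : ∑ j, (f j).totalDegree ≤ ∑ _j : J, D := Finset.sum_le_sum fun j _ => hD j
    simp only [Finset.sum_const, Finset.card_univ, smul_eq_mul] at h2
    omega
  let Φ : (σ → ℝ) → (σ → ℝ) := fun y i =>
    -(MvPolynomial.eval y (MvPolynomial.pderiv i F)) / MvPolynomial.eval y F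
  have hΦ : ∀ y, MvPolynomial.eval y F ≠ 0 → HasFDerivAt Φ (fderiv ℝ Φ y) y := by
    intro y hy
    apply DifferentiableAt.hasFDerivAt
    rw [differentiableAt_pi]
    intro i
    have h1 : DifferentiableAt ℝ (fun y => -(MvPolynomial.eval y (MvPolynomial.pderiv i F))) y :=
      (mvp_hasFDerivAt _ y).differentiableAt.neg
    have h2 : DifferentiableAt ℝ (fun y => MvPolynomial.eval y F) y :=
      (mvp_hasFDerivAt F y).differentiableAt
    simp only [Φ, div_eq_mul_inv]
    exact h1.mul (h2.inv hy)
  let S : Set (σ → ℝ) := {y | MvPolynomial.eval y F ≠ 0 ∧ (fderiv ℝ Φ y).det = 0}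
  have hS : MeasureTheory.volume (Φ '' S) = 0 :=
    MeasureTheory.addHaar_image_eq_zero_of_det_fderivWithin_eq_zero MeasureTheory.volume
      (fun y hy => (hΦ y hy.1).hasFDerivWithinAt) (fun y hy => hy.2)
  obtain ⟨v, hv⟩ : ∃ v, v ∉ Φ '' S := by
    by_contra hall
    push Not at hall
    rw [eq_univ_of_forall hall] at hS
    exact (isOpen_univ.measure_ne_zero MeasureTheory.volume univ_nonempty) hS
  choose z hz0 hzpos hzc using fun b => warren_crit f q F rfl hq (x b) (hqx b) (hx b) v
  refine mvp_bezout (fun i => MvPolynomial.pderiv i F + MvPolynomial.C (v i) * F) _ ?_ z ?_ ?_ ?_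
  · intro i
    refine (MvPolynomial.totalDegree_add _ _).trans (max_le ?_ ?_)
    · exact (mvp_totalDegree_pderiv i F).trans hFd
    · refine (MvPolynomial.totalDegree_mul _ _).trans ?_
      simpa using hFd
  · intro b b' hbb
    by_contra hne
    obtain ⟨j, hj⟩ := hsep b b' hne
    have h1 := hzpos b j
    have h2 := hzpos b' j
    rw [← hbb] at h2
    have h3 := mul_pos h1 h2
    have h4 : 0 ≤ MvPolynomial.eval (z b) (f j) ^ 2 := sq_nonneg _
    nlinarith
  · intro b i
    simpa using hzc b i
  · intro b y
    have hΦz : Φ (z b) = v := by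
      funext i
      have := hzc b i
      simp only [Φ]
      rw [div_eq_iff (hz0 b)]; linarith
    have hdet : (fderiv ℝ Φ (z b)).det ≠ 0 := fun h => hv ⟨z b, ⟨hz0 b, h⟩, hΦz⟩
    have hsurj : Function.Surjective (fderiv ℝ Φ (z b)) := by
      have hu : IsUnit (LinearMap.det (fderiv ℝ Φ (z b) : (σ → ℝ) →ₗ[ℝ] (σ → ℝ))) :=
        isUnit_iff_ne_zero.2 hdet
      exact (LinearEquiv.ofIsUnitDet (v := Pi.basisFun ℝ σ) (v' := Pi.basisFun ℝ σ)
        (f := (fderiv ℝ Φ (z b) : (σ → ℝ) →ₗ[ℝ] (σ → ℝ)))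
        (by rw [LinearMap.det_toMatrix]; exact hu)).surjective
    obtain ⟨w, hw⟩ := hsurj (fun i => -(MvPolynomial.eval (z b) F)⁻¹ * y i)
    refine ⟨w, fun i => ?_⟩
    have hA := mvp_hasFDerivAt (MvPolynomial.pderiv i F + MvPolynomial.C (v i) * F) (z b)
    have hΦi : HasFDerivAt (fun y => Φ y i)
        ((ContinuousLinearMap.proj i : (σ → ℝ) →L[ℝ] ℝ).comp (fderiv ℝ Φ (z b))) (z b) :=
      (hasFDerivAt_pi'.1 (hΦ (z b) (hz0 b))) i
    have hB := (mvp_hasFDerivAt F (z b)).mul (hΦi.const_sub (v i))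
    have hev : (fun y => MvPolynomial.eval y (MvPolynomial.pderiv i F + MvPolynomial.C (v i) * F))
        =ᶠ[nhds (z b)] ((fun y => MvPolynomial.eval y F) * fun y => v i - Φ y i) := by
      have : {y | MvPolynomial.eval y F ≠ 0} ∈ nhds (z b) :=
        (isOpen_ne_fun (mvp_continuous F) continuous_const).mem_nhds (hz0 b)
      filter_upwards [this] with y hy
      have hy' : MvPolynomial.eval y F ≠ 0 := hy
      simp only [Pi.mul_apply, map_add, map_mul, MvPolynomial.eval_C, Φ]
      field_simp
      ring
    have hC := hA.unique (hB.congr_of_eventuallyEq hev)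
    have h1 := congrArg (fun A : (σ → ℝ) →L[ℝ] ℝ => A w) hC
    have h2 : Φ (z b) i = v i := congrFun hΦz i
    have h3 : (fderiv ℝ Φ (z b)) w i = -(MvPolynomial.eval (z b) F)⁻¹ * y i := by rw [hw]
    simp only [sum_apply, add_apply, smul_apply, neg_apply, ContinuousLinearMap.comp_apply,
      ContinuousLinearMap.proj_apply, smul_eq_mul, h2, h3, sub_self, zero_mul, add_zero] at h1
    rw [h1]
    have := hz0 b
    field_simp

/-- polynomial functions of bounded degree -/
def PolyFun {σ : Type} (f : (σ → ℝ) → ℝ) (d : ℕ) : Prop :=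
  ∃ p : MvPolynomial σ ℝ, p.totalDegree ≤ d ∧ ∀ x, MvPolynomial.eval x p = f x

theorem warren {σ B J : Type} [Fintype σ] [Fintype B] [Fintype J]
    (f : J → (σ → ℝ) → ℝ) (D : ℕ) (hD : ∀ j, PolyFun (f j) D)
    (x : B → σ → ℝ)
    (hsep : ∀ b b', (∀ j, SignType.sign (f j (x b)) = SignType.sign (f j (x b'))) → b = b') :
    Fintype.card B ≤
      (Fintype.card σ * (2 * Fintype.card J * D + 2) + 1) ^ Fintype.card σ := by
  classical
  choose p hpd hpe using hD
  obtain ⟨ε, hε0, hε⟩ : ∃ ε : ℝ, 0 < ε ∧ ∀ b j, f j (x b) ≠ 0 → ε < |f j (x b)| := by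
    have : ∀ᶠ ε in nhdsWithin (0:ℝ) (Ioi 0), ∀ b j, f j (x b) ≠ 0 → ε < |f j (x b)| := by
      rw [Filter.eventually_all]
      intro b
      rw [Filter.eventually_all]
      intro j
      by_cases h : f j (x b) = 0
      · simp [h]
      · have h2 : ∀ᶠ ε in nhds (0:ℝ), ε < |f j (x b)| := eventually_lt_nhds (abs_pos.2 h)
        filter_upwards [nhdsWithin_le_nhds h2] with ε hε _ using hε
    obtain ⟨ε, h1, h2⟩ := (this.and self_mem_nhdsWithin).exists
    exact ⟨ε, h2, h1⟩
  have h := warren_strict (fun j : J × Bool => p j.1 + MvPolynomial.C (if j.2 then ε else -ε)) D ?_ x ?_ ?_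
  · simpa [mul_comm] using h
  · intro j
    exact (MvPolynomial.totalDegree_add _ _).trans (max_le (hpd _) (by simp))
  · rintro b ⟨j, s⟩
    simp only [map_add, MvPolynomial.eval_C, hpe]
    by_cases h : f j (x b) = 0
    · rw [h]; cases s <;> simp [hε0.ne']
    · have hlt := hε b j h
      intro h0
      cases s
      · simp at h0
        have heq : f j (x b) = ε := by linarith
        rw [heq, abs_of_pos hε0] at hlt; linarith
      · simp at h0
        have heq : f j (x b) = -ε := by linarith
        rw [heq, abs_neg, abs_of_pos hε0] at hlt; linarith
  · intro b b' hbb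
    have : ¬ ∀ j, SignType.sign (f j (x b)) = SignType.sign (f j (x b')) := fun h => hbb (hsep b b' h)
    push Not at this
    obtain ⟨j, hj⟩ := this
    have hb := hε b j
    have hb' := hε b' j
    have key : (0 < f j (x b) ∧ f j (x b') ≤ 0) ∨ (0 < f j (x b') ∧ f j (x b) ≤ 0) ∨
        (f j (x b) < 0 ∧ 0 ≤ f j (x b')) ∨ (f j (x b') < 0 ∧ 0 ≤ f j (x b)) := by
      by_contra hcon
      apply hj
      clear hb hb' hj hε
      generalize f j (x b) = r at *
      generalize f j (x b') = r' at *
      rcases lt_trichotomy r 0 with h1 | h1 | h1 <;>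
      rcases lt_trichotomy r' 0 with h2 | h2 | h2
      · rw [sign_neg h1, sign_neg h2]
      · exact absurd (Or.inr (Or.inr (Or.inl ⟨h1, h2.ge⟩))) hcon
      · exact absurd (Or.inr (Or.inr (Or.inl ⟨h1, h2.le⟩))) hcon
      · exact absurd (Or.inr (Or.inr (Or.inr ⟨h2, h1.ge⟩))) hcon
      · rw [h1, h2]
      · exact absurd (Or.inr (Or.inl ⟨h2, h1.le⟩)) hcon
      · exact absurd (Or.inl ⟨h1, h2.le⟩) hcon
      · exact absurd (Or.inl ⟨h1, h2.le⟩) hcon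
      · rw [sign_pos h1, sign_pos h2]
    have aux : ∀ r r' : ℝ, (r ≠ 0 → ε < |r|) → (r' ≠ 0 → ε < |r'|) → 0 < r → r' ≤ 0 →
        (r - ε) * (r' - ε) < 0 := by
      intro r r' h1 _ h3 h4
      have := h1 h3.ne'
      rw [abs_of_pos h3] at this
      nlinarith
    simp only [map_add, MvPolynomial.eval_C, hpe, Prod.exists]
    rcases key with ⟨h1, h2⟩ | ⟨h1, h2⟩ | ⟨h1, h2⟩ | ⟨h1, h2⟩
    · refine ⟨j, false, ?_⟩
      have := aux _ _ hb hb' h1 h2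
      simpa [sub_eq_add_neg] using this
    · refine ⟨j, false, ?_⟩
      have := aux _ _ hb' hb h1 h2
      rw [mul_comm]
      simpa [sub_eq_add_neg] using this
    · refine ⟨j, true, ?_⟩
      have := aux (-f j (x b)) (-f j (x b')) (by simpa using hb) (by simpa using hb') (by linarith) (by linarith)
      simp; nlinarith
    · refine ⟨j, true, ?_⟩
      have := aux (-f j (x b')) (-f j (x b)) (by simpa using hb') (by simpa using hb) (by linarith) (by linarith)
      simp; nlinarith


def dot4 (a b : Fin 4 → ℝ) : ℝ := ∑ i, a i * b i

/-- evaluation of the circle form of `X` on the conic parametrization of `Y` -/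
def QQ (X Y : Fin 4 → Fin 4 → ℝ) (u : ℝ) : ℝ :=
  dot4 (X 3) (Y 0) + u * dot4 (X 3) (Y 1) + u ^ 2 * dot4 (X 3) (Y 2)

def PairReal (X Y : Fin 4 → Fin 4 → ℝ) (u v : ℝ) : Prop :=
  (0 < u ∧ u < 1) ∧ (0 < v ∧ v < 1) ∧ QQ Y X u = 0 ∧ QQ X Y v = 0 ∧
    (QQ Y X 0 * QQ Y X 1 < 0 ∨ QQ X Y 0 * QQ X Y 1 < 0)

def TripleReal (b : Bool) (A V H : Fin 4 → Fin 4 → ℝ) (w : Fin 2 → ℝ) : Prop :=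
  (0 < w 0 ∧ w 0 < 1) ∧ (0 < w 1 ∧ w 1 < 1) ∧
  ∃ uAV uVA uAH uHA, PairReal A V uAV uVA ∧ PairReal A H uAH uHA ∧
    (b = true → uAH < uAV ∧ uVA < w 0 ∧ uHA < w 1) ∧
    (b = false → uAV < uAH ∧ w 0 < uVA ∧ w 1 < uHA)

theorem quad_signs {a b c u : ℝ} (hu : 0 < u ∧ u < 1) (h0 : c + u * b + u ^ 2 * a = 0)
    (hs : c * (c + b + a) < 0) {v : ℝ} (hv : 0 < v ∧ v < 1) :
    (u < v → 0 < (c + v * b + v ^ 2 * a) * (c + b + a)) ∧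
    (v < u → (c + v * b + v ^ 2 * a) * (c + b + a) < 0) := by
  obtain ⟨hu0, hu1⟩ := hu
  obtain ⟨hv0, hv1⟩ := hv
  -- factor
  have hc : c = -u * (b + u * a) := by linarith
  have hg : ∀ t, c + t * b + t ^ 2 * a = (t - u) * (b + u * a + t * a) := by
    intro t; rw [hc]; ring
  have h1 : c + b + a = (1 - u) * (b + u * a + a) := by rw [hc]; ring
  set g := b + u * a with hgdef
  have hg01 : 0 < g * (g + a) := by
    rw [h1, hc] at hs
    have h3 : -u * g * ((1 - u) * (g + a)) = -((u * (1 - u)) * (g * (g + a))) := by ring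
    rw [h3] at hs
    have h4 : 0 < u * (1 - u) := by nlinarith
    by_contra hcon
    push Not at hcon
    nlinarith [mul_nonneg h4.le (neg_nonneg.2 hcon)]
  have hgv : 0 < (g + v * a) * (g + a) := by
    have : (g + v * a) * (g + a) = (1 - v) * (g * (g + a)) + v * (g + a) ^ 2 := by ring
    rw [this]
    have : 0 < (1 - v) * (g * (g + a)) := mul_pos (by linarith) hg01
    positivity
  rw [hg v, h1]
  have e : (v - u) * (g + v * a) * ((1 - u) * (g + a)) =
    ((1 - u) * ((g + v * a) * (g + a))) * (v - u) := by ring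
  rw [e]
  have h5 : 0 < (1 - u) * ((g + v * a) * (g + a)) := mul_pos (by linarith) hgv
  exact ⟨fun h => mul_pos h5 (by linarith), fun h => mul_neg_of_pos_of_neg h5 (by linarith)⟩

theorem sign_mul_pos {x y : ℝ} (h : 0 < x * y) : SignType.sign x = SignType.sign y := by
  rcases pos_and_pos_or_neg_and_neg_of_mul_pos h with ⟨h1, h2⟩ | ⟨h1, h2⟩
  · rw [sign_pos h1, sign_pos h2]
  · rw [sign_neg h1, sign_neg h2]

theorem sign_comb {x y s t : ℝ} (hs : 0 < s) (ht : 0 < t) :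
    (SignType.sign x = SignType.sign y → SignType.sign (s * x + t * y) = SignType.sign x) ∧
    (x = 0 → SignType.sign (s * x + t * y) = SignType.sign y) ∧
    (y = 0 → SignType.sign (s * x + t * y) = SignType.sign x) := by
  refine ⟨fun h => ?_, fun h => ?_, fun h => ?_⟩
  · rcases lt_trichotomy x 0 with hx | hx | hx
    · rw [sign_neg hx] at h ⊢
      have hy := sign_eq_neg_one_iff.1 h.symm
      exact sign_neg (by nlinarith)
    · subst hx
      rw [sign_zero] at h ⊢
      have hy := sign_eq_zero_iff.1 h.symm
      simp [hy]
    · rw [sign_pos hx] at h ⊢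
      have hy := sign_eq_one_iff.1 h.symm
      exact sign_pos (by positivity)
  · subst h; simp [sign_mul, sign_pos ht]
  · subst h; simp [sign_mul, sign_pos hs]

/-- sign of second quadratic at root of first -/
theorem root_signs {a₁ b₁ c₁ a₂ b₂ c₂ u : ℝ} (hu : 0 < u ∧ u < 1)
    (h0 : c₁ + u * b₁ + u ^ 2 * a₁ = 0) (hs : c₁ * (c₁ + b₁ + a₁) < 0)
    (l0 l1 Q : ℝ) (hl0 : l0 = a₁ * c₂ - a₂ * c₁)
    (hl1 : l1 = a₁ * (c₂ + b₂ + a₂) - a₂ * (c₁ + b₁ + a₁))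
    (hQ : Q = c₂ + u * b₂ + u ^ 2 * a₂) :
    (a₁ = 0 → SignType.sign Q = SignType.sign (a₂ * c₁ ^ 2 - b₂ * b₁ * c₁ + c₂ * b₁ ^ 2)) ∧
    (SignType.sign l0 = SignType.sign l1 → SignType.sign (a₁ * Q) = SignType.sign l0) ∧
    (l0 = 0 → SignType.sign (a₁ * Q) = SignType.sign l1) ∧
    (l1 = 0 → SignType.sign (a₁ * Q) = SignType.sign l0) ∧
    (l0 * l1 < 0 → SignType.sign (a₁ * Q) = - (SignType.sign l1 * SignType.sign
      (a₁ * l0 ^ 2 - b₁ * (l1 - l0) * l0 + c₁ * (l1 - l0) ^ 2) *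
        SignType.sign (c₁ + b₁ + a₁))) := by
  have hL : a₁ * Q = (1 - u) * l0 + u * l1 := by
    rw [hQ, hl0, hl1]; linear_combination a₂ * h0
  have hsc := sign_comb (x := l0) (y := l1) (show 0 < 1 - u by linarith [hu.2]) hu.1
  rw [← hL] at hsc
  refine ⟨fun ha => ?_, hsc.1, hsc.2.1, hsc.2.2, fun hl => ?_⟩
  · subst ha
    have hb : b₁ ≠ 0 := by
      rintro rfl
      simp at h0
      simp [h0] at hs
    have : a₂ * c₁ ^ 2 - b₂ * b₁ * c₁ + c₂ * b₁ ^ 2 = b₁ ^ 2 * Q := by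
      have hc : c₁ = - u * b₁ := by linarith
      rw [hc, hQ]; ring
    rw [this, sign_mul, sign_pos (by positivity : 0 < b₁ ^ 2), one_mul]
  · have hne : l1 - l0 ≠ 0 := by
      intro h
      have h' : l1 = l0 := by linarith
      rw [h'] at hl
      nlinarith [mul_self_nonneg l0]
    set t := -l0 / (l1 - l0) with ht
    have htl : (l1 - l0) * t = - l0 := by rw [ht]; field_simp
    have hR : a₁ * l0 ^ 2 - b₁ * (l1 - l0) * l0 + c₁ * (l1 - l0) ^ 2 =
        (l1 - l0) ^ 2 * (c₁ + t * b₁ + t ^ 2 * a₁) := by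
      have : l0 = - ((l1 - l0) * t) := by linarith
      generalize l1 - l0 = d at *
      rw [this]; ring
    have hsq : 0 < (l1 - l0) ^ 2 := by positivity
    have ht0 : 0 < t := by
      have : 0 < (l1 - l0) ^ 2 * t := by
        have : (l1 - l0) ^ 2 * t = (l1 - l0) * ((l1 - l0) * t) := by ring
        rw [this, htl]; nlinarith [sq_nonneg l0]
      exact (mul_pos_iff_of_pos_left hsq).1 this
    have ht1 : t < 1 := by
      have : 0 < (l1 - l0) ^ 2 * (1 - t) := by
        have : (l1 - l0) ^ 2 * (1 - t) = (l1 - l0) * ((l1 - l0) - (l1 - l0) * t) := by ring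
        rw [this, htl]; nlinarith [sq_nonneg l1]
      linarith [(mul_pos_iff_of_pos_left hsq).1 this]
    have hq := quad_signs hu h0 hs ⟨ht0, ht1⟩
    have hLu : a₁ * Q = (l1 - l0) * (u - t) := by
      rw [hL]; linear_combination htl
    have hsl : SignType.sign (l1 - l0) = SignType.sign l1 := by
      apply sign_mul_pos; nlinarith [sq_nonneg l1]
    rw [hLu, hR, sign_mul, sign_mul, sign_pos hsq, one_mul, hsl, mul_assoc]
    rw [← sign_mul (c₁ + t * b₁ + t ^ 2 * a₁)]
    rcases lt_trichotomy u t with h | h | h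
    · rw [sign_pos (hq.1 h), sign_neg (by linarith : u - t < 0)]; simp
    · subst h
      rw [h0]; simp
    · rw [sign_neg (hq.2 h), sign_pos (by linarith : 0 < u - t)]; simp

theorem root_signs_eq {a₁ b₁ c₁ a₂ b₂ c₂ u a₁' b₁' c₁' a₂' b₂' c₂' u' : ℝ}
    (hu : 0 < u ∧ u < 1) (hu' : 0 < u' ∧ u' < 1)
    (h0 : c₁ + u * b₁ + u ^ 2 * a₁ = 0) (hs : c₁ * (c₁ + b₁ + a₁) < 0)
    (h0' : c₁' + u' * b₁' + u' ^ 2 * a₁' = 0) (hs' : c₁' * (c₁' + b₁' + a₁') < 0)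
    (l0 l1 : ℝ) (hl0 : l0 = a₁ * c₂ - a₂ * c₁)
    (hl1 : l1 = a₁ * (c₂ + b₂ + a₂) - a₂ * (c₁ + b₁ + a₁))
    (l0' l1' : ℝ) (hl0' : l0' = a₁' * c₂' - a₂' * c₁')
    (hl1' : l1' = a₁' * (c₂' + b₂' + a₂') - a₂' * (c₁' + b₁' + a₁'))
    (sa : SignType.sign a₁ = SignType.sign a₁')
    (se : SignType.sign (a₂ * c₁ ^ 2 - b₂ * b₁ * c₁ + c₂ * b₁ ^ 2) =
      SignType.sign (a₂' * c₁' ^ 2 - b₂' * b₁' * c₁' + c₂' * b₁' ^ 2))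
    (sl0 : SignType.sign l0 = SignType.sign l0')
    (sl1 : SignType.sign l1 = SignType.sign l1')
    (sr : SignType.sign (a₁ * l0 ^ 2 - b₁ * (l1 - l0) * l0 + c₁ * (l1 - l0) ^ 2) =
      SignType.sign (a₁' * l0' ^ 2 - b₁' * (l1' - l0') * l0' + c₁' * (l1' - l0') ^ 2))
    (s1 : SignType.sign (c₁ + b₁ + a₁) = SignType.sign (c₁' + b₁' + a₁')) :
    SignType.sign (c₂ + u * b₂ + u ^ 2 * a₂) = SignType.sign (c₂' + u' * b₂' + u' ^ 2 * a₂') := by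
  obtain ⟨p1, p2, p3, p4, p5⟩ := root_signs hu h0 hs l0 l1 _ hl0 hl1 rfl
  obtain ⟨q1, q2, q3, q4, q5⟩ := root_signs hu' h0' hs' l0' l1' _ hl0' hl1' rfl
  set Q := c₂ + u * b₂ + u ^ 2 * a₂
  set Q' := c₂' + u' * b₂' + u' ^ 2 * a₂'
  by_cases ha : a₁ = 0
  · have ha' : a₁' = 0 := by rw [ha, sign_zero] at sa; exact sign_eq_zero_iff.1 sa.symm
    rw [p1 ha, q1 ha', se]
  · have hm : SignType.sign (a₁ * Q) = SignType.sign (a₁' * Q') := by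
      by_cases e1 : SignType.sign l0 = SignType.sign l1
      · rw [p2 e1, q2 (by rw [← sl0, e1, sl1]), sl0]
      by_cases e2 : l0 = 0
      · have e2' : l0' = 0 := by rw [e2, sign_zero] at sl0; exact sign_eq_zero_iff.1 sl0.symm
        rw [p3 e2, q3 e2', sl1]
      by_cases e3 : l1 = 0
      · have e3' : l1' = 0 := by rw [e3, sign_zero] at sl1; exact sign_eq_zero_iff.1 sl1.symm
        rw [p4 e3, q4 e3', sl0]
      have e4 : l0 * l1 < 0 := by
        by_contra hcon
        push Not at hcon
        exact e1 (sign_mul_pos (lt_of_le_of_ne hcon (mul_ne_zero e2 e3).symm))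
      have e4' : l0' * l1' < 0 := by
        rw [← sign_eq_neg_one_iff, sign_mul, ← sl0, ← sl1, ← sign_mul, sign_eq_neg_one_iff]
        exact e4
      rw [p5 e4, q5 e4', sl1, sr, s1]
    rw [sign_mul, sign_mul, ← sa] at hm
    have hne : SignType.sign a₁ ≠ 0 := by rwa [ne_eq, sign_eq_zero_iff]
    exact mul_left_cancel₀ hne hm

/-- The polynomials whose signs determine a bit. -/
def decPoly (A V H : Fin 4 → Fin 4 → ℝ) (w : Fin 2 → ℝ) : Fin 15 → ℝ :=
  let c₁ := dot4 (V 3) (A 0)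
  let b₁ := dot4 (V 3) (A 1)
  let a₁ := dot4 (V 3) (A 2)
  let c₂ := dot4 (H 3) (A 0)
  let b₂ := dot4 (H 3) (A 1)
  let a₂ := dot4 (H 3) (A 2)
  let l0 := a₁ * c₂ - a₂ * c₁
  let l1 := a₁ * (c₂ + b₂ + a₂) - a₂ * (c₁ + b₁ + a₁)
  ![QQ A V (w 0), QQ A V 0, QQ A V 1, QQ A H (w 1), QQ A H 0, QQ A H 1,
    c₁, c₁ + b₁ + a₁, c₂, c₂ + b₂ + a₂, a₁,
    a₂ * c₁ ^ 2 - b₂ * b₁ * c₁ + c₂ * b₁ ^ 2, l0, l1,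
    a₁ * l0 ^ 2 - b₁ * (l1 - l0) * l0 + c₁ * (l1 - l0) ^ 2]

theorem QQ_zero (X Y) : QQ X Y 0 = dot4 (X 3) (Y 0) := by simp [QQ]
theorem QQ_one (X Y) : QQ X Y 1 = dot4 (X 3) (Y 0) + dot4 (X 3) (Y 1) + dot4 (X 3) (Y 2) := by
  simp [QQ]

theorem sign_transfer {x y x' y' : ℝ} (hx : SignType.sign x = SignType.sign x')
    (hy : SignType.sign y = SignType.sign y') (h : x * y < 0) : x' * y' < 0 := by
  rw [← sign_eq_neg_one_iff, sign_mul, ← hx, ← hy, ← sign_mul, sign_eq_neg_one_iff]; exact h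

theorem sign_clash {x y x' y' : ℝ} (hx : SignType.sign x = SignType.sign x')
    (hy : SignType.sign y = SignType.sign y') (h : 0 < x * y) (h' : x' * y' < 0) : False := by
  have := sign_transfer hx.symm hy.symm h'
  linarith

theorem decode_aux {A V H A' V' H' : Fin 4 → Fin 4 → ℝ} {w w' : Fin 2 → ℝ}
    (h : TripleReal true A V H w) (h' : TripleReal false A' V' H' w')
    (hs : ∀ j, SignType.sign (decPoly A V H w j) = SignType.sign (decPoly A' V' H' w' j)) :
    False := by
  obtain ⟨hw0, hw1, uAV, uVA, uAH, uHA, ⟨p1, p2, p3, p4, p5⟩, ⟨q1, q2, q3, q4, q5⟩, ho, -⟩ := h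
  obtain ⟨o1, o2, o3⟩ := ho rfl
  obtain ⟨hw0', hw1', uAV', uVA', uAH', uHA', ⟨p1', p2', p3', p4', p5'⟩,
    ⟨q1', q2', q3', q4', q5'⟩, -, ho'⟩ := h'
  obtain ⟨o1', o2', o3'⟩ := ho' rfl
  have s0 : SignType.sign (QQ A V (w 0)) = SignType.sign (QQ A' V' (w' 0)) := hs 0
  have s1 : SignType.sign (QQ A V 0) = SignType.sign (QQ A' V' 0) := hs 1
  have s2 : SignType.sign (QQ A V 1) = SignType.sign (QQ A' V' 1) := hs 2
  have s3 : SignType.sign (QQ A H (w 1)) = SignType.sign (QQ A' H' (w' 1)) := hs 3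
  have s4 : SignType.sign (QQ A H 0) = SignType.sign (QQ A' H' 0) := hs 4
  have s5 : SignType.sign (QQ A H 1) = SignType.sign (QQ A' H' 1) := hs 5
  by_cases hV : QQ A V 0 * QQ A V 1 < 0
  · have hV' := sign_transfer s1 s2 hV
    have e := (quad_signs p2 p4 (by rwa [QQ_zero, QQ_one] at hV) hw0).1 o2
    have e' := (quad_signs p2' p4' (by rwa [QQ_zero, QQ_one] at hV') hw0').2 o2'
    rw [QQ_one, QQ_one] at s2
    exact sign_clash s0 s2 e e'
  by_cases hH : QQ A H 0 * QQ A H 1 < 0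
  · have hH' := sign_transfer s4 s5 hH
    have e := (quad_signs q2 q4 (by rwa [QQ_zero, QQ_one] at hH) hw1).1 o3
    have e' := (quad_signs q2' q4' (by rwa [QQ_zero, QQ_one] at hH') hw1').2 o3'
    rw [QQ_one, QQ_one] at s5
    exact sign_clash s3 s5 e e'
  have hV' : ¬ QQ A' V' 0 * QQ A' V' 1 < 0 := fun h => hV (sign_transfer s1.symm s2.symm h)
  have hH' : ¬ QQ A' H' 0 * QQ A' H' 1 < 0 := fun h => hH (sign_transfer s4.symm s5.symm h)
  have g1 := p5.resolve_right hV
  have g2 := q5.resolve_right hH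
  have g1' := p5'.resolve_right hV'
  have g2' := q5'.resolve_right hH'
  rw [QQ_zero, QQ_one] at g1 g2 g1' g2'
  have key := root_signs_eq p1 p1' p3 g1 p3' g1' _ _ rfl rfl _ _ rfl rfl
    (hs 10) (hs 11) (hs 12) (hs 13) (hs 14) (hs 7)
  have e := (quad_signs q1 q3 g2 p1).1 o1
  have e' := (quad_signs q1' q3' g2' p1').2 o1'
  exact sign_clash key (hs 9) e e'

theorem decode {A V H A' V' H' : Fin 4 → Fin 4 → ℝ} {w w' : Fin 2 → ℝ} {b b' : Bool}
    (h : TripleReal b A V H w) (h' : TripleReal b' A' V' H' w')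
    (hs : ∀ j, SignType.sign (decPoly A V H w j) = SignType.sign (decPoly A' V' H' w' j)) :
    b = b' := by
  cases b <;> cases b'
  · rfl
  · exact (decode_aux h' h fun j => (hs j).symm).elim
  · exact (decode_aux h h' hs).elim
  · rfl

section
variable {σ : Type} {f g : (σ → ℝ) → ℝ} {d e : ℕ}

theorem PolyFun.mono (hf : PolyFun f d) (h : d ≤ e) : PolyFun f e := by
  obtain ⟨p, hp, hpe⟩ := hf; exact ⟨p, hp.trans h, hpe⟩

theorem PolyFun.add (hf : PolyFun f d) (hg : PolyFun g d) : PolyFun (fun x => f x + g x) d := by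
  obtain ⟨p, hp, hpe⟩ := hf; obtain ⟨q, hq, hqe⟩ := hg
  exact ⟨p + q, (MvPolynomial.totalDegree_add _ _).trans (max_le hp hq), fun x => by
    simp [hpe, hqe]⟩

theorem PolyFun.sub (hf : PolyFun f d) (hg : PolyFun g d) : PolyFun (fun x => f x - g x) d := by
  obtain ⟨p, hp, hpe⟩ := hf; obtain ⟨q, hq, hqe⟩ := hg
  exact ⟨p - q, (MvPolynomial.totalDegree_sub _ _).trans (max_le hp hq), fun x => by
    simp [hpe, hqe]⟩

theorem PolyFun.mul (hf : PolyFun f d) (hg : PolyFun g e) :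
    PolyFun (fun x => f x * g x) (d + e) := by
  obtain ⟨p, hp, hpe⟩ := hf; obtain ⟨q, hq, hqe⟩ := hg
  exact ⟨p * q, (MvPolynomial.totalDegree_mul _ _).trans (add_le_add hp hq), fun x => by
    simp [hpe, hqe]⟩

theorem PolyFun.sq (hf : PolyFun f d) : PolyFun (fun x => f x ^ 2) (d + d) := by
  simpa only [_root_.sq] using hf.mul hf

theorem PolyFun.coord (i : σ) : PolyFun (fun x : σ → ℝ => x i) 1 :=
  ⟨MvPolynomial.X i, by simp, fun x => by simp⟩

theorem PolyFun.dot {f g : (σ → ℝ) → Fin 4 → ℝ} (hf : ∀ i, PolyFun (fun x => f x i) d)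
    (hg : ∀ i, PolyFun (fun x => g x i) e) : PolyFun (fun x => dot4 (f x) (g x)) (d + e) := by
  simp only [dot4, Fin.sum_univ_four]
  exact ((((hf 0).mul (hg 0)).add ((hf 1).mul (hg 1))).add ((hf 2).mul (hg 2))).add
    ((hf 3).mul (hg 3))
end

theorem decPoly_polyFun {σ : Type} (A V H : (σ → ℝ) → Fin 4 → Fin 4 → ℝ)
    (w : (σ → ℝ) → Fin 2 → ℝ)
    (hA : ∀ i j, PolyFun (fun x => A x i j) 1) (hV : ∀ i j, PolyFun (fun x => V x i j) 1)
    (hH : ∀ i j, PolyFun (fun x => H x i j) 1) (hw : ∀ i, PolyFun (fun x => w x i) 1)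
    (j : Fin 15) : PolyFun (fun x => decPoly (A x) (V x) (H x) (w x) j) 10 := by
  have hd : ∀ (X Y : (σ → ℝ) → Fin 4 → Fin 4 → ℝ), (∀ i j, PolyFun (fun x => X x i j) 1) →
    (∀ i j, PolyFun (fun x => Y x i j) 1) → ∀ r, PolyFun (fun x => dot4 (X x 3) (Y x r)) 2 :=
    fun X Y hX hY r => PolyFun.dot (f := fun x => X x 3) (g := fun x => Y x r) (hX 3) (hY r)
  have hc1 := hd V A hV hA 0
  have hb1 := hd V A hV hA 1
  have ha1 := hd V A hV hA 2
  have hc2 := hd H A hH hA 0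
  have hb2 := hd H A hH hA 1
  have ha2 := hd H A hH hA 2
  have hl0 := (ha1.mul hc2).sub (ha2.mul hc1)
  have hl1 := (ha1.mul ((hc2.add hb2).add ha2)).sub (ha2.mul ((hc1.add hb1).add ha1))
  have hQ : ∀ (X Y : (σ → ℝ) → Fin 4 → Fin 4 → ℝ), (∀ i j, PolyFun (fun x => X x i j) 1) →
    (∀ i j, PolyFun (fun x => Y x i j) 1) → ∀ u : (σ → ℝ) → ℝ, PolyFun u 1 →
      PolyFun (fun x => QQ (X x) (Y x) (u x)) 4 := by
    intro X Y hX hY u hu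
    simp only [QQ]
    exact (((hd X Y hX hY 0).mono (by norm_num)).add ((hu.mul (hd X Y hX hY 1)).mono
      (by norm_num))).add (hu.sq.mul (hd X Y hX hY 2))
  have hQ0 : ∀ (X Y : (σ → ℝ) → Fin 4 → Fin 4 → ℝ), (∀ i j, PolyFun (fun x => X x i j) 1) →
    (∀ i j, PolyFun (fun x => Y x i j) 1) → PolyFun (fun x => QQ (X x) (Y x) 0) 2 := by
    intro X Y hX hY
    simp only [QQ_zero]; exact hd X Y hX hY 0
  have hQ1 : ∀ (X Y : (σ → ℝ) → Fin 4 → Fin 4 → ℝ), (∀ i j, PolyFun (fun x => X x i j) 1) →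
    (∀ i j, PolyFun (fun x => Y x i j) 1) → PolyFun (fun x => QQ (X x) (Y x) 1) 2 := by
    intro X Y hX hY
    simp only [QQ_one]; exact ((hd X Y hX hY 0).add (hd X Y hX hY 1)).add (hd X Y hX hY 2)
  fin_cases j
  · exact (hQ A V hA hV _ (hw 0)).mono (by norm_num)
  · exact (hQ0 A V hA hV).mono (by norm_num)
  · exact (hQ1 A V hA hV).mono (by norm_num)
  · exact (hQ A H hA hH _ (hw 1)).mono (by norm_num)
  · exact (hQ0 A H hA hH).mono (by norm_num)
  · exact (hQ1 A H hA hH).mono (by norm_num)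
  · exact hc1.mono (by norm_num)
  · exact ((hc1.add hb1).add ha1).mono (by norm_num)
  · exact hc2.mono (by norm_num)
  · exact ((hc2.add hb2).add ha2).mono (by norm_num)
  · exact ha1.mono (by norm_num)
  · exact (((ha2.mul hc1.sq).sub (((hb2.mul hb1).mul hc1))).add (hc2.mul hb1.sq)).mono
      (by norm_num)
  · exact hl0.mono (by norm_num)
  · exact hl1.mono (by norm_num)
  · exact (((ha1.mul hl0.sq).sub ((hb1.mul (hl1.sub hl0)).mul hl0)).add
      (hc1.mul (hl1.sub hl0).sq))

theorem realizable_count {C W G : Type} [Fintype C] [Fintype W] [Fintype G]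
    (iA iV iH : G → C) (iW : G → W)
    (hreal : ∀ β : G → Bool, ∃ (X : C → Fin 4 → Fin 4 → ℝ) (w : W → Fin 2 → ℝ),
      ∀ g, TripleReal (β g) (X (iA g)) (X (iV g)) (X (iH g)) (w (iW g))) :
    2 ^ Fintype.card G ≤
      ((Fintype.card C * 16 + Fintype.card W * 2) * (300 * Fintype.card G + 2) + 1) ^
        (Fintype.card C * 16 + Fintype.card W * 2) := by
  classical
  choose X w hX using hreal
  let σ := (C × Fin 4 × Fin 4) ⊕ (W × Fin 2)
  have h := warren (σ := σ) (B := G → Bool) (J := G × Fin 15)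
    (fun j x => decPoly (fun r s => x (Sum.inl (iA j.1, r, s))) (fun r s => x (Sum.inl (iV j.1, r, s)))
      (fun r s => x (Sum.inl (iH j.1, r, s))) (fun r => x (Sum.inr (iW j.1, r))) j.2) 10
    (fun j => decPoly_polyFun _ _ _ _ (fun _ _ => PolyFun.coord _) (fun _ _ => PolyFun.coord _)
      (fun _ _ => PolyFun.coord _) (fun _ => PolyFun.coord _) j.2)
    (fun β => Sum.elim (fun p => X β p.1 p.2.1 p.2.2) (fun p => w β p.1 p.2))
    (by
      intro β β' hs
      funext g
      exact decode (hX β g) (hX β' g) fun j => hs (g, j))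
  have e1 : Fintype.card σ = Fintype.card C * 16 + Fintype.card W * 2 := by
    simp [σ]
  rw [e1] at h
  simp only [Fintype.card_fun, Fintype.card_bool, Fintype.card_prod, Fintype.card_fin] at h
  convert h using 4
  ring


theorem num_bound (N G : ℕ) (hN : N ≤ 35 * 2 ^ 36) (hG : G = 2 ^ 48) :
    (N * (300 * G + 2) + 1) ^ N < 2 ^ G := by
  have h1 : N * (300 * G + 2) + 1 ≤ 2 ^ 99 := by
    have : N * (300 * G + 2) ≤ (35 * 2 ^ 36) * (300 * 2 ^ 48 + 2) := by
      rw [hG]; exact Nat.mul_le_mul_right _ hN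
    have h2 : (35 * 2 ^ 36) * (300 * 2 ^ 48 + 2) + 1 ≤ 2 ^ 99 := by norm_num
    omega
  calc (N * (300 * G + 2) + 1) ^ N ≤ (2 ^ 99) ^ N := Nat.pow_le_pow_left h1 _
    _ = 2 ^ (99 * N) := by rw [← pow_mul]
    _ < 2 ^ G := Nat.pow_lt_pow_right (by norm_num) (by rw [hG]; omega)

theorem exists_nonreal (k : ℕ) (hk : k = 4096)
    (iA iV iH : Fin k × Fin (k ^ 2) × Fin k → Fin (k + 2) × Fin (2 * k ^ 2))
    (iW : Fin k × Fin (k ^ 2) × Fin k → Fin k × Fin (k ^ 2)) :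
    ∃ β : Fin k × Fin (k ^ 2) × Fin k → Bool,
      ∀ (X : Fin (k + 2) × Fin (2 * k ^ 2) → Fin 4 → Fin 4 → ℝ)
        (w : Fin k × Fin (k ^ 2) → Fin 2 → ℝ),
      ∃ g, ¬ TripleReal (β g) (X (iA g)) (X (iV g)) (X (iH g)) (w (iW g)) := by
  by_contra hcon
  push Not at hcon
  have h := realizable_count iA iV iH iW hcon
  have hG : Fintype.card (Fin k × Fin (k ^ 2) × Fin k) = 2 ^ 48 := by
    simp only [Fintype.card_prod, Fintype.card_fin]; subst hk; norm_num
  have hN : Fintype.card (Fin (k + 2) × Fin (2 * k ^ 2)) * 16 +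
      Fintype.card (Fin k × Fin (k ^ 2)) * 2 ≤ 35 * 2 ^ 36 := by
    simp only [Fintype.card_prod, Fintype.card_fin]; subst hk; norm_num
  exact absurd h (not_le.2 (num_bound _ _ hN hG))


def circ (a : Fin 4 → ℝ) (p : Plane) : ℝ :=
  a 0 * (p 0 ^ 2 + p 1 ^ 2) + a 1 * p 0 + a 2 * p 1 + a 3

def lift4 (p : Plane) : Fin 4 → ℝ := ![p 0 ^ 2 + p 1 ^ 2, p 0, p 1, 1]

def NonDeg (a : Fin 4 → ℝ) : Prop := 0 < a 1 ^ 2 + a 2 ^ 2 - 4 * a 0 * a 3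

theorem dot4_lift (a p) : dot4 a (lift4 p) = circ a p := by
  simp [dot4, lift4, circ, Fin.sum_univ_four]

theorem NonDeg.neg {a} (h : NonDeg a) : NonDeg (-a) := by
  unfold NonDeg at *; simp; linarith

theorem circ_neg (a p) : circ (-a) p = - circ a p := by simp [circ]; ring

theorem NonDeg.grad {a} (h : NonDeg a) {p : Plane} (hp : circ a p = 0) :
    0 < (2 * a 0 * p 0 + a 1) ^ 2 + (2 * a 0 * p 1 + a 2) ^ 2 := by
  unfold NonDeg at h; unfold circ at hp
  have : (2 * a 0 * p 0 + a 1) ^ 2 + (2 * a 0 * p 1 + a 2) ^ 2 =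
    a 1 ^ 2 + a 2 ^ 2 - 4 * a 0 * a 3 := by linear_combination 4 * a 0 * hp
  linarith

/-- `X` and `u` describe the curve `Γ` over `[l, r]`. -/
structure Param (Γ : ℝ → Plane) (l r : ℝ) (X : Fin 4 → Fin 4 → ℝ) (u : ℝ → ℝ) : Prop where
  nondeg : NonDeg (X 3)
  zero : ∀ x ∈ Icc l r, circ (X 3) (Γ x) = 0
  cont : ContinuousOn u (Icc l r)
  mono : StrictMonoOn u (Icc l r)
  left : u l = 0
  right : u r = 1
  eqn : ∀ x ∈ Icc l r, ∃ W : ℝ, 0 < W ∧ W • lift4 (Γ x) = X 0 + u x • X 1 + u x ^ 2 • X 2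

theorem Plane.ext2 {p q : Plane} (h0 : p 0 = q 0) (h1 : p 1 = q 1) : p = q := by
  ext i; fin_cases i <;> assumption

set_option maxHeartbeats 2000000 in
theorem exists_param {Γ : ℝ → Plane} (hΓ : Continuous Γ) (hinj : Function.Injective Γ)
    {l r' r : ℝ} (h1 : l < r') (h2 : r' < r) {a : Fin 4 → ℝ} (ha : NonDeg a)
    (hz : ∀ x ∈ Icc l r, circ a (Γ x) = 0) : ∃ X u, Param Γ l r' X u := by
  obtain ⟨z, hzdef⟩ : ∃ z, z = Γ r := ⟨_, rfl⟩
  have hz0 : circ a z = 0 := hzdef ▸ hz r ⟨by linarith, le_rfl⟩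
  have hN := ha.grad hz0
  obtain ⟨n0, hn0⟩ : ∃ n0, n0 = 2 * a 0 * z 0 + a 1 := ⟨_, rfl⟩
  obtain ⟨n1, hn1⟩ : ∃ n1, n1 = 2 * a 0 * z 1 + a 2 := ⟨_, rfl⟩
  rw [← hn0, ← hn1] at hN
  obtain ⟨N, hNdef⟩ : ∃ N, N = n0 ^ 2 + n1 ^ 2 := ⟨_, rfl⟩
  rw [← hNdef] at hN
  obtain ⟨D, hDdef⟩ : ∃ D : ℝ → ℝ, D = fun x => (Γ x 0 - z 0) ^ 2 + (Γ x 1 - z 1) ^ 2 := ⟨_, rfl⟩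
  have hD : ∀ x ∈ Icc l r', 0 < D x := by
    intro x hx
    have hne : Γ x ≠ z := fun h => by
      have := hinj (h.trans hzdef)
      linarith [hx.2]
    by_contra hcon
    have h3 : (Γ x 0 - z 0) ^ 2 + (Γ x 1 - z 1) ^ 2 ≤ 0 := by rw [hDdef] at hcon; exact not_lt.1 hcon
    refine hne (Plane.ext2 ?_ ?_)
    · nlinarith [sq_nonneg (Γ x 0 - z 0), sq_nonneg (Γ x 1 - z 1)]
    · nlinarith [sq_nonneg (Γ x 0 - z 0), sq_nonneg (Γ x 1 - z 1)]
  obtain ⟨t, htdef⟩ : ∃ t : ℝ → ℝ, t = fun x => (-n1 * (Γ x 0 - z 0) + n0 * (Γ x 1 - z 1)) / D x :=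
    ⟨_, rfl⟩
  have htD : ∀ x ∈ Icc l r', t x * D x = -n1 * (Γ x 0 - z 0) + n0 * (Γ x 1 - z 1) := by
    intro x hx
    have := (hD x hx).ne'
    rw [htdef]; exact div_mul_cancel₀ _ this
  have hnD : ∀ x ∈ Icc l r', -a 0 * D x = n0 * (Γ x 0 - z 0) + n1 * (Γ x 1 - z 1) := by
    intro x hx
    have h3 := hz x ⟨hx.1, by linarith [hx.2]⟩
    simp only [hDdef, hn0, hn1]
    unfold circ at h3 hz0
    linear_combination -h3 + hz0
  have hd0 : ∀ x ∈ Icc l r', N * (Γ x 0 - z 0) = D x * (-a 0 * n0 - t x * n1) := by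
    intro x hx
    rw [hNdef]; linear_combination -n0 * hnD x hx + n1 * htD x hx
  have hd1 : ∀ x ∈ Icc l r', N * (Γ x 1 - z 1) = D x * (-a 0 * n1 + t x * n0) := by
    intro x hx
    rw [hNdef]; linear_combination -n1 * hnD x hx - n0 * htD x hx
  have hW : ∀ x ∈ Icc l r', D x * (a 0 ^ 2 + t x ^ 2) = N := by
    intro x hx
    have h3 : N * (D x * (D x * (a 0 ^ 2 + t x ^ 2))) = N * (D x * N) := by
      have e : D x * N ^ 2 = (N * (Γ x 0 - z 0)) ^ 2 + (N * (Γ x 1 - z 1)) ^ 2 := by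
        simp only [hDdef]; ring
      rw [hd0 x hx, hd1 x hx] at e
      linear_combination -e + (D x ^ 2 * (a 0 ^ 2 + t x ^ 2)) * hNdef
    exact mul_left_cancel₀ (hD x hx).ne' (mul_left_cancel₀ hN.ne' h3)
  have htinj : InjOn t (Icc l r') := by
    intro x hx y hy hxy
    apply hinj
    have e1 := hW x hx
    have e2 := hW y hy
    have hDD : D x = D y := by
      rw [← hxy] at e2
      have hpos : 0 < a 0 ^ 2 + t x ^ 2 := by
        by_contra hcon
        have : a 0 ^ 2 + t x ^ 2 = 0 := le_antisymm (not_lt.1 hcon) (by positivity)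
        rw [this] at e1; simp at e1; linarith
      exact mul_right_cancel₀ hpos.ne' (e1.trans e2.symm)
    have f0 := hd0 x hx
    have f0' := hd0 y hy
    have f1 := hd1 x hx
    have f1' := hd1 y hy
    rw [← hDD, ← hxy] at f0' f1'
    refine Plane.ext2 ?_ ?_
    · have := mul_left_cancel₀ hN.ne' (f0.trans f0'.symm); linarith
    · have := mul_left_cancel₀ hN.ne' (f1.trans f1'.symm); linarith
  have hc0 : Continuous fun x => Γ x 0 := by fun_prop
  have hc1 : Continuous fun x => Γ x 1 := by fun_prop
  have htc : ContinuousOn t (Icc l r') := by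
    have hDc : Continuous D := by rw [hDdef]; fun_prop
    rw [htdef]
    refine ContinuousOn.div (by fun_prop) hDc.continuousOn fun x hx => (hD x hx).ne'
  have hl : l ∈ Icc l r' := ⟨le_rfl, h1.le⟩
  have hr : r' ∈ Icc l r' := ⟨h1.le, le_rfl⟩
  obtain ⟨t0, ht0⟩ : ∃ t0, t0 = t l := ⟨_, rfl⟩
  obtain ⟨s, hs⟩ : ∃ s, s = t r' - t l := ⟨_, rfl⟩
  have hs0 : s ≠ 0 := fun h => h1.ne' (htinj hr hl (by linarith))
  obtain ⟨u, hudef⟩ : ∃ u : ℝ → ℝ, u = fun x => (t x - t0) / s := ⟨_, rfl⟩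
  have hut : ∀ x, t x = t0 + s * u x := by
    intro x; rw [hudef]; simp only []; rw [mul_div_cancel₀ _ hs0]; ring
  have hul : u l = 0 := by rw [hudef]; simp [ht0]
  have hur : u r' = 1 := by rw [hudef]; simp only [ht0]; rw [← hs]; exact div_self hs0
  have huc : ContinuousOn u (Icc l r') := by
    rw [hudef]; exact (htc.sub continuousOn_const).div_const _
  have huinj : InjOn u (Icc l r') := by
    intro x hx y hy hxy
    apply htinj hx hy
    rw [hut, hut, hxy]
  let e : Fin 4 → ℝ := lift4 z
  let b : Fin 4 → ℝ := ![2 * (-z 0 * n1 + z 1 * n0), -n1, n0, 0]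
  let c : Fin 4 → ℝ := a 0 ^ 2 • lift4 z +
    ![-2 * a 0 * (z 0 * n0 + z 1 * n1) + N, -a 0 * n0, -a 0 * n1, 0]
  refine ⟨![c + t0 • b + t0 ^ 2 • e, s • b + (2 * t0 * s) • e, s ^ 2 • e, a], u,
    ⟨ha, fun x hx => hz x ⟨hx.1, by linarith [hx.2]⟩, huc,
      huc.strictMonoOn_of_injOn_Icc h1.le ?_ huinj, hul, hur, ?_⟩⟩
  · rw [hul, hur]; norm_num
  · intro x hx
    refine ⟨a 0 ^ 2 + t x ^ 2, ?_, ?_⟩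
    · by_contra hcon
      have h3 : a 0 ^ 2 + t x ^ 2 = 0 := le_antisymm (not_lt.1 hcon) (by positivity)
      have h4 := hW x hx
      rw [h3] at h4; simp at h4; linarith
    · have g0 : (a 0 ^ 2 + t x ^ 2) * (Γ x 0 - z 0) = -a 0 * n0 - t x * n1 := by
        apply mul_left_cancel₀ (hD x hx).ne'
        linear_combination hd0 x hx + (Γ x 0 - z 0) * hW x hx
      have g1 : (a 0 ^ 2 + t x ^ 2) * (Γ x 1 - z 1) = -a 0 * n1 + t x * n0 := by
        apply mul_left_cancel₀ (hD x hx).ne'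
        linear_combination hd1 x hx + (Γ x 1 - z 1) * hW x hx
      have g2 : (a 0 ^ 2 + t x ^ 2) * (Γ x 0 ^ 2 + Γ x 1 ^ 2) =
          (a 0 ^ 2 + t x ^ 2) * (z 0 ^ 2 + z 1 ^ 2) + 2 * (z 0 * (-a 0 * n0 - t x * n1)
            + z 1 * (-a 0 * n1 + t x * n0)) + N := by
        have h4 := hW x hx
        rw [hDdef] at h4
        linear_combination h4 + 2 * z 0 * g0 + 2 * z 1 * g1
      funext i
      rw [hut x] at g0 g1 g2 ⊢
      fin_cases i
      · simp [lift4, b, c, e]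
        linear_combination g2
      · simp [lift4, b, c, e]
        linear_combination g0
      · simp [lift4, b, c, e]
        linear_combination g1
      · simp [lift4, b, c, e]
        ring

set_option maxHeartbeats 1000000 in
theorem three_points_alg {x1 x2 y1 y2 e1 e2 A0 A1 A2 B0 B1 B2 : ℝ}
    (n12 : ¬ (x1 = 0 ∧ x2 = 0)) (n13 : ¬ (y1 = 0 ∧ y2 = 0)) (n23 : ¬ (x1 = y1 ∧ x2 = y2))
    (hA : 0 < A1 ^ 2 + A2 ^ 2)
    (a2 : A0 * (x1 ^ 2 + x2 ^ 2) + A1 * x1 + A2 * x2 = 0)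
    (a3 : A0 * (y1 ^ 2 + y2 ^ 2) + A1 * y1 + A2 * y2 = 0)
    (hp : A0 * (e1 ^ 2 + e2 ^ 2) + A1 * e1 + A2 * e2 = 0)
    (b2 : B0 * (x1 ^ 2 + x2 ^ 2) + B1 * x1 + B2 * x2 = 0)
    (b3 : B0 * (y1 ^ 2 + y2 ^ 2) + B1 * y1 + B2 * y2 = 0) :
    B0 * (e1 ^ 2 + e2 ^ 2) + B1 * e1 + B2 * e2 = 0 := by
  obtain ⟨x0, hx0⟩ : ∃ x0, x0 = x1 ^ 2 + x2 ^ 2 := ⟨_, rfl⟩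
  obtain ⟨y0, hy0⟩ : ∃ y0, y0 = y1 ^ 2 + y2 ^ 2 := ⟨_, rfl⟩
  obtain ⟨e0, he0⟩ : ∃ e0, e0 = e1 ^ 2 + e2 ^ 2 := ⟨_, rfl⟩
  rw [← hx0] at a2 b2
  rw [← hy0] at a3 b3
  rw [← he0] at hp ⊢
  obtain ⟨w0, hw0⟩ : ∃ w0, w0 = x1 * y2 - x2 * y1 := ⟨_, rfl⟩
  obtain ⟨w1, hw1⟩ : ∃ w1, w1 = x2 * y0 - x0 * y2 := ⟨_, rfl⟩
  obtain ⟨w2, hw2⟩ : ∃ w2, w2 = x0 * y1 - x1 * y0 := ⟨_, rfl⟩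
  have hw : 0 < w0 ^ 2 + w1 ^ 2 + w2 ^ 2 := by
    by_contra hcon
    have z1 : w1 = 0 := by nlinarith [sq_nonneg w0, sq_nonneg w1, sq_nonneg w2]
    have z2 : w2 = 0 := by nlinarith [sq_nonneg w0, sq_nonneg w1, sq_nonneg w2]
    have hx : 0 < x0 := by
      rw [hx0]
      by_contra hc
      exact n12 ⟨by nlinarith [sq_nonneg x1, sq_nonneg x2], by nlinarith [sq_nonneg x1, sq_nonneg x2]⟩
    have hy : 0 < y0 := by
      rw [hy0]
      by_contra hc
      exact n13 ⟨by nlinarith [sq_nonneg y1, sq_nonneg y2], by nlinarith [sq_nonneg y1, sq_nonneg y2]⟩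
    have q1 : x0 * y1 = y0 * x1 := by linarith
    have q2 : x0 * y2 = y0 * x2 := by linarith
    have q3 : x0 = y0 := by
      have h4 : x0 ^ 2 * y0 = y0 ^ 2 * x0 := by
        calc x0 ^ 2 * y0 = (x0 * y1) ^ 2 + (x0 * y2) ^ 2 := by rw [hy0]; ring
          _ = (y0 * x1) ^ 2 + (y0 * x2) ^ 2 := by rw [q1, q2]
          _ = y0 ^ 2 * x0 := by rw [hx0]; ring
      have h5 : (x0 * y0) * x0 = (x0 * y0) * y0 := by linear_combination h4
      exact mul_left_cancel₀ (mul_pos hx hy).ne' h5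
    rw [← q3] at q1 q2
    exact n23 ⟨(mul_left_cancel₀ hx.ne' q1).symm, (mul_left_cancel₀ hx.ne' q2).symm⟩
  have ca0 : A1 * w2 - A2 * w1 = 0 := by
    rw [hw1, hw2]; linear_combination x0 * a3 - y0 * a2
  have ca1 : A2 * w0 - A0 * w2 = 0 := by
    rw [hw0, hw2]; linear_combination x1 * a3 - y1 * a2
  have ca2 : A0 * w1 - A1 * w0 = 0 := by
    rw [hw1, hw0]; linear_combination x2 * a3 - y2 * a2
  have cb0 : B1 * w2 - B2 * w1 = 0 := by
    rw [hw1, hw2]; linear_combination x0 * b3 - y0 * b2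
  have cb1 : B2 * w0 - B0 * w2 = 0 := by
    rw [hw0, hw2]; linear_combination x1 * b3 - y1 * b2
  have cb2 : B0 * w1 - B1 * w0 = 0 := by
    rw [hw1, hw0]; linear_combination x2 * b3 - y2 * b2
  have hwE : w0 * e0 + w1 * e1 + w2 * e2 = 0 := by
    have h6 : (A0 ^ 2 + A1 ^ 2 + A2 ^ 2) * (w0 * e0 + w1 * e1 + w2 * e2) = 0 := by
      linear_combination (A0 * w0 + A1 * w1 + A2 * w2) * hp + (A1 * e2 - A2 * e1) * ca0 +
        (A2 * e0 - A0 * e2) * ca1 + (A0 * e1 - A1 * e0) * ca2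
    exact (mul_eq_zero.1 h6).resolve_left (by nlinarith [sq_nonneg A0])
  have h7 : (w0 ^ 2 + w1 ^ 2 + w2 ^ 2) * (B0 * e0 + B1 * e1 + B2 * e2) = 0 := by
    linear_combination (B0 * w0 + B1 * w1 + B2 * w2) * hwE - (w1 * e2 - w2 * e1) * cb0 -
        (w2 * e0 - w0 * e2) * cb1 - (w0 * e1 - w1 * e0) * cb2
  exact (mul_eq_zero.1 h7).resolve_left hw.ne'

set_option maxHeartbeats 2000000 in
/-- Three common points of two nondegenerate circles force equality. -/
theorem three_points {a b : Fin 4 → ℝ} (ha : NonDeg a) (hb : NonDeg b) {p₁ p₂ p₃ : Plane}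
    (h12 : p₁ ≠ p₂) (h13 : p₁ ≠ p₃) (h23 : p₂ ≠ p₃)
    (a1 : circ a p₁ = 0) (a2 : circ a p₂ = 0) (a3 : circ a p₃ = 0)
    (b1 : circ b p₁ = 0) (b2 : circ b p₂ = 0) (b3 : circ b p₃ = 0)
    {p : Plane} (hp : circ a p = 0) : circ b p = 0 := by
  have key : ∀ c : Fin 4 → ℝ, ∀ q : Plane, circ c p₁ = 0 → circ c q = 
      c 0 * ((q 0 - p₁ 0) ^ 2 + (q 1 - p₁ 1) ^ 2) + (2 * c 0 * p₁ 0 + c 1) * (q 0 - p₁ 0)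
        + (2 * c 0 * p₁ 1 + c 2) * (q 1 - p₁ 1) := by
    intro c q hc
    unfold circ at *
    linear_combination hc
  have hA := ha.grad a1
  have hB := hb.grad b1
  rw [key a _ a1] at a2 a3 hp
  rw [key b _ b1] at b2 b3 ⊢
  have n12 : ¬ (p₂ 0 - p₁ 0 = 0 ∧ p₂ 1 - p₁ 1 = 0) := fun h =>
    h12 (Plane.ext2 (by linarith [h.1]) (by linarith [h.2]))
  have n13 : ¬ (p₃ 0 - p₁ 0 = 0 ∧ p₃ 1 - p₁ 1 = 0) := fun h =>
    h13 (Plane.ext2 (by linarith [h.1]) (by linarith [h.2]))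
  have n23 : ¬ (p₂ 0 - p₁ 0 = p₃ 0 - p₁ 0 ∧ p₂ 1 - p₁ 1 = p₃ 1 - p₁ 1) := fun h =>
    h23 (Plane.ext2 (by linarith [h.1]) (by linarith [h.2]))
  exact three_points_alg n12 n13 n23 hA a2 a3 hp b2 b3


def Gam (h : Plane ≃ₜ Plane) (f : ℝ → ℝ) (x : ℝ) : Plane := h !₂[x, f x]

def Crosses (f g : ℝ → ℝ) (x₀ : ℝ) : Prop :=
  f x₀ = g x₀ ∧ ∃ s : ℝ, (∀ x < x₀, s * (f x - g x) < 0) ∧ (∀ x, x₀ < x → 0 < s * (f x - g x))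

theorem Crosses.symm {f g x₀} (h : Crosses f g x₀) : Crosses g f x₀ := by
  obtain ⟨h1, s, h2, h3⟩ := h
  refine ⟨h1.symm, -s, fun x hx => ?_, fun x hx => ?_⟩
  · have := h2 x hx; nlinarith
  · have := h3 x hx; nlinarith

theorem Crosses.unique {f g x₀} (h : Crosses f g x₀) {x} (hx : f x = g x) : x = x₀ := by
  obtain ⟨h1, s, h2, h3⟩ := h
  rcases lt_trichotomy x x₀ with h | h | h
  · have := h2 x h; simp [hx] at this
  · exact h
  · have := h3 x h; simp [hx] at this

theorem continuous_mk2 {f : ℝ → ℝ} (hf : Continuous f) : Continuous fun x => (!₂[x, f x] : Plane) := by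
  refine (PiLp.continuous_toLp 2 _).comp (continuous_pi fun i => ?_)
  fin_cases i
  · exact continuous_id
  · exact hf

theorem Gam_continuous (h : Plane ≃ₜ Plane) {f : ℝ → ℝ} (hf : Continuous f) : Continuous (Gam h f) :=
  h.continuous.comp (continuous_mk2 hf)

theorem Gam_inj (h : Plane ≃ₜ Plane) {f g : ℝ → ℝ} {x y} (he : Gam h f x = Gam h g y) :
    x = y ∧ f x = g y := by
  have h1 := h.injective he
  exact ⟨by simpa using congrArg (fun p : Plane => p 0) h1, by simpa using congrArg (fun p : Plane => p 1) h1⟩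

theorem Gam_injective (h : Plane ≃ₜ Plane) (f : ℝ → ℝ) : Function.Injective (Gam h f) :=
  fun _ _ he => (Gam_inj h he).1

theorem circ_shift (b : Fin 4 → ℝ) (p n : Plane) (t : ℝ) :
    circ b (p + t • n) = circ b p + t * ((2 * b 0 * p 0 + b 1) * n 0 + (2 * b 0 * p 1 + b 2) * n 1
      + b 0 * t * (n 0 ^ 2 + n 1 ^ 2)) := by
  simp [circ]; ring

theorem crossing_ge (h : Plane ≃ₜ Plane) {f g : ℝ → ℝ} (hf : Continuous f) (hg : Continuous g)
    {l r x₀ : ℝ} (hx : x₀ ∈ Ioo l r) (hc : Crosses f g x₀) {b : Fin 4 → ℝ} (hb : NonDeg b)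
    (hz : ∀ x ∈ Icc l r, circ b (Gam h g x) = 0) :
    ¬ ∀ x ∈ Icc l r, 0 ≤ circ b (Gam h f x) := by
  intro hpos
  have hGc := Gam_continuous h hf
  obtain ⟨hfg, s, hs1, hs2⟩ := hc
  have hp1 : Gam h f x₀ = Gam h g x₀ := by simp [Gam, hfg]
  set p := Gam h f x₀ with hp
  have hbp : circ b p = 0 := by rw [hp1]; exact hz x₀ (Ioo_subset_Icc_self hx)
  have hgr := hb.grad hbp
  let n : Plane := !₂[2 * b 0 * p 0 + b 1, 2 * b 0 * p 1 + b 2]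
  let F : ℝ × ℝ → Plane := fun z => Gam h f z.1 + z.2 • n
  have hF : Continuous F := (hGc.comp continuous_fst).add (continuous_snd.smul continuous_const)
  have hF0 : F (x₀, 0) = p := by simp [F, hp]
  have e1 : ∀ᶠ z in nhds (x₀, (0:ℝ)), (h.symm (F z)) 0 ∈ Ioo l r := by
    have hc1 : Continuous fun z => (h.symm (F z)) 0 := by
      have := h.symm.continuous.comp hF
      exact (PiLp.continuous_apply 2 _ 0).comp this
    apply hc1.continuousAt.eventually_mem
    apply isOpen_Ioo.mem_nhds
    rw [hF0, hp]; simpa [Gam] using hx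
  have e2 : ∀ᶠ z in nhds (x₀, (0:ℝ)), 0 < (2 * b 0 * (Gam h f z.1) 0 + b 1) * n 0 +
      (2 * b 0 * (Gam h f z.1) 1 + b 2) * n 1 + b 0 * z.2 * (n 0 ^ 2 + n 1 ^ 2) := by
    have g0 : Continuous fun x => (Gam h f x) 0 := (PiLp.continuous_apply 2 _ 0).comp hGc
    have g1 : Continuous fun x => (Gam h f x) 1 := (PiLp.continuous_apply 2 _ 1).comp hGc
    have hc2 : Continuous fun z : ℝ × ℝ => (2 * b 0 * (Gam h f z.1) 0 + b 1) * n 0 +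
      (2 * b 0 * (Gam h f z.1) 1 + b 2) * n 1 + b 0 * z.2 * (n 0 ^ 2 + n 1 ^ 2) := by
      have g0' : Continuous fun z : ℝ × ℝ => (Gam h f z.1) 0 := g0.comp continuous_fst
      have g1' : Continuous fun z : ℝ × ℝ => (Gam h f z.1) 1 := g1.comp continuous_fst
      fun_prop
    apply hc2.continuousAt.eventually_mem (s := Ioi 0)
    apply isOpen_Ioi.mem_nhds
    simp only [mem_Ioi, n]
    simp
    rw [← hp]
    nlinarith
  have e3 : ∀ᶠ z in nhds (x₀, (0:ℝ)), z.1 ∈ Ioo l r :=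
    (continuous_fst.continuousAt (x := (x₀, (0:ℝ)))).eventually_mem (isOpen_Ioo.mem_nhds hx)
  obtain ⟨δ, hδ, hall⟩ := Metric.eventually_nhds_iff.1 (e1.and (e2.and e3))
  -- the function psi
  let ψ : ℝ × ℝ → ℝ := fun z => (h.symm (F z)) 1 - g ((h.symm (F z)) 0)
  have hψ : Continuous ψ := by
    have := h.symm.continuous.comp hF
    exact ((PiLp.continuous_apply 2 _ 1).comp this).sub
      (hg.comp ((PiLp.continuous_apply 2 _ 0).comp this))
  have hψ0 : ∀ x, ψ (x, 0) = f x - g x := by intro x; simp [ψ, F, Gam]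
  have f1 : ∀ᶠ t in nhds (0:ℝ), s * ψ (x₀ - δ / 2, t) < 0 := by
    have hc3 : Continuous fun t : ℝ => s * ψ (x₀ - δ / 2, t) := by fun_prop
    apply hc3.continuousAt.eventually_mem (s := Iio 0)
    apply isOpen_Iio.mem_nhds
    simp only [mem_Iio, hψ0]; exact hs1 _ (by linarith)
  have f2 : ∀ᶠ t in nhds (0:ℝ), 0 < s * ψ (x₀ + δ / 2, t) := by
    have hc3 : Continuous fun t : ℝ => s * ψ (x₀ + δ / 2, t) := by fun_prop
    apply hc3.continuousAt.eventually_mem (s := Ioi 0)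
    apply isOpen_Ioi.mem_nhds
    simp only [mem_Ioi, hψ0]; exact hs2 _ (by linarith)
  have f3 : ∀ᶠ t in nhds (0:ℝ), t < δ := eventually_lt_nhds hδ
  have f4 : ∀ᶠ t in nhdsWithin (0:ℝ) (Ioi 0), s * ψ (x₀ - δ / 2, t) < 0 ∧
      0 < s * ψ (x₀ + δ / 2, t) ∧ t < δ := nhdsWithin_le_nhds (f1.and (f2.and f3))
  obtain ⟨t, ⟨ht1, ht2, ht3⟩, ht0⟩ := (f4.and self_mem_nhdsWithin).exists
  have ht0' : 0 < t := ht0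
  have hivt := intermediate_value_Icc (a := x₀ - δ / 2) (b := x₀ + δ / 2) (by linarith)
    (f := fun x => s * ψ (x, t)) (by fun_prop : Continuous fun x => s * ψ (x, t)).continuousOn
  obtain ⟨x, hx1, hx2⟩ := hivt ⟨ht1.le, ht2.le⟩
  have hs0 : s ≠ 0 := by rintro rfl; simp at ht1
  have hψx : ψ (x, t) = 0 := by
    have : s * ψ (x, t) = 0 := hx2
    exact (mul_eq_zero.1 this).resolve_left hs0
  have hdist : dist (x, t) (x₀, (0:ℝ)) < δ := by
    rw [Prod.dist_eq, max_lt_iff, Real.dist_eq, Real.dist_eq, abs_lt, abs_lt]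
    refine ⟨⟨by linarith [hx1.1], by linarith [hx1.2]⟩, ⟨by linarith, by linarith⟩⟩
  obtain ⟨k1, k2, k3⟩ := hall hdist
  have hcp : 0 < circ b (F (x, t)) := by
    simp only [F]
    rw [circ_shift]
    have h1 := hpos x (Ioo_subset_Icc_self k3)
    have h2 := mul_pos ht0' k2
    simp only at h2
    linarith
  have hFe : F (x, t) = Gam h g ((h.symm (F (x, t))) 0) := by
    unfold Gam
    rw [← h.symm_apply_eq]
    refine Plane.ext2 (by simp) ?_
    simp only [ψ] at hψx
    simp; linarith
  rw [hFe, hz _ (Ioo_subset_Icc_self k1)] at hcp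
  exact lt_irrefl _ hcp

theorem crossing_le (h : Plane ≃ₜ Plane) {f g : ℝ → ℝ} (hf : Continuous f) (hg : Continuous g)
    {l r x₀ : ℝ} (hx : x₀ ∈ Ioo l r) (hc : Crosses f g x₀) {b : Fin 4 → ℝ} (hb : NonDeg b)
    (hz : ∀ x ∈ Icc l r, circ b (Gam h g x) = 0) :
    ¬ ∀ x ∈ Icc l r, circ b (Gam h f x) ≤ 0 := by
  intro hn
  refine crossing_ge h hf hg hx hc hb.neg (fun x hx => ?_) (fun x hx => ?_)
  · rw [circ_neg, hz x hx, neg_zero]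
  · rw [circ_neg]; linarith [hn x hx]

theorem Param.QQ_eq {Γ l r X u} (hP : Param Γ l r X u) (Y : Fin 4 → Fin 4 → ℝ) {x} (hx : x ∈ Icc l r) :
    ∃ W, 0 < W ∧ QQ Y X (u x) = W * circ (Y 3) (Γ x) := by
  obtain ⟨W, hW, he⟩ := hP.eqn x hx
  refine ⟨W, hW, ?_⟩
  have h0 := congrFun he 0
  have h1 := congrFun he 1
  have h2 := congrFun he 2
  have h3 := congrFun he 3
  simp only [Pi.smul_apply, Pi.add_apply, smul_eq_mul] at h0 h1 h2 h3
  rw [← dot4_lift]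
  simp only [QQ, dot4, Fin.sum_univ_four]
  linear_combination -(Y 3 0) * h0 - (Y 3 1) * h1 - (Y 3 2) * h2 - (Y 3 3) * h3

theorem Param.mem_Ioo {Γ l r X u} (hP : Param Γ l r X u) {x} (hx : x ∈ Ioo l r) :
    0 < u x ∧ u x < 1 := by
  have hlr : l ≤ r := (hx.1.trans hx.2).le
  rw [← hP.left, ← hP.right]
  exact ⟨hP.mono ⟨le_rfl, hlr⟩ (Ioo_subset_Icc_self hx) hx.1,
    hP.mono (Ioo_subset_Icc_self hx) ⟨hlr, le_rfl⟩ hx.2⟩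

/-- A quadratic with a root in (0,1) and no sign change between the ends is
semidefinite or has another root. -/
theorem quad_second_root {a b c u : ℝ} (hu : 0 < u ∧ u < 1) (h0 : c + u * b + u ^ 2 * a = 0)
    (hs : ¬ c * (c + b + a) < 0) :
    (∀ t, 0 ≤ c + t * b + t ^ 2 * a) ∨ (∀ t, c + t * b + t ^ 2 * a ≤ 0) ∨
    ∃ t, 0 ≤ t ∧ t ≤ 1 ∧ t ≠ u ∧ c + t * b + t ^ 2 * a = 0 := by
  have hg : ∀ t, c + t * b + t ^ 2 * a = (t - u) * (b + u * a + t * a) := by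
    intro t; linear_combination h0
  by_cases ha : a = 0
  · by_cases hb : b = 0
    · left; intro t; rw [hg t, ha, hb]; simp
    · exfalso; apply hs
      subst ha
      have hc : c = - u * b := by linarith
      rw [hc]
      have h1 : 0 < u * (1 - u) := mul_pos hu.1 (by linarith [hu.2])
      have h2 : 0 < b ^ 2 := by positivity
      nlinarith [mul_pos h1 h2]
  set t₁ := -(b + u * a) / a with ht₁
  have hta : t₁ * a = -(b + u * a) := by rw [ht₁]; field_simp
  by_cases htu : t₁ = u
  · rw [htu] at hta
    have hsq : ∀ t, c + t * b + t ^ 2 * a = a * (t - u) ^ 2 := by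
      intro t; rw [hg t]; linear_combination (t - u) * hta
    rcases lt_or_gt_of_ne ha with h | h
    · right; left; intro t; rw [hsq]; nlinarith [sq_nonneg (t - u)]
    · left; intro t; rw [hsq]; positivity
  · right; right
    have hsq : ∀ t, c + t * b + t ^ 2 * a = a * ((t - u) * (t - t₁)) := by
      intro t; rw [hg t]; linear_combination (t - u) * (hta)
    have hc : c = a * (u * t₁) := by linear_combination hsq 0
    have hcb : c + b + a = a * ((1 - u) * (1 - t₁)) := by linear_combination hsq 1
    have h3 : 0 ≤ t₁ * (1 - t₁) := by
      by_contra hcon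
      apply hs
      rw [hcb, hc]
      have h1 : 0 < u * (1 - u) := mul_pos hu.1 (by linarith [hu.2])
      have h2 : 0 < a ^ 2 := by positivity
      have h4 : a * (u * t₁) * (a * ((1 - u) * (1 - t₁))) =
        (a ^ 2 * (u * (1 - u))) * (t₁ * (1 - t₁)) := by ring
      rw [h4]
      exact mul_neg_of_pos_of_neg (mul_pos h2 h1) (not_le.1 hcon)
    refine ⟨t₁, by nlinarith, by nlinarith, htu, by rw [hsq]; ring⟩

theorem second_point (h : Plane ≃ₜ Plane) {f g : ℝ → ℝ} (hf : Continuous f) (hg : Continuous g)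
    {l r x₀ : ℝ} (hx : x₀ ∈ Ioo l r) (hc : Crosses f g x₀) {X Y u v}
    (hX : Param (Gam h f) l r X u) (hY : Param (Gam h g) l r Y v)
    (hs : ¬ QQ Y X 0 * QQ Y X 1 < 0) :
    ∃ x ∈ Icc l r, x ≠ x₀ ∧ circ (Y 3) (Gam h f x) = 0 := by
  have hlr : l ≤ r := (hx.1.trans hx.2).le
  have hx' := Ioo_subset_Icc_self hx
  have hG : Gam h f x₀ = Gam h g x₀ := by simp [Gam, hc.1]
  have h0 : QQ Y X (u x₀) = 0 := by
    obtain ⟨W, -, hW⟩ := hX.QQ_eq Y hx'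
    rw [hW, hG, hY.zero _ hx', mul_zero]
  rcases quad_second_root (hX.mem_Ioo hx) h0 (by rwa [QQ_zero, QQ_one] at hs) with h1 | h1 | h1
  · refine (crossing_ge h hf hg hx hc hY.nondeg hY.zero fun x hx => ?_).elim
    obtain ⟨W, hW, he⟩ := hX.QQ_eq Y hx
    have h2 : 0 ≤ QQ Y X (u x) := h1 (u x)
    rw [he] at h2
    exact (mul_nonneg_iff_of_pos_left hW).1 h2
  · refine (crossing_le h hf hg hx hc hY.nondeg hY.zero fun x hx => ?_).elim
    obtain ⟨W, hW, he⟩ := hX.QQ_eq Y hx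
    have h2 : QQ Y X (u x) ≤ 0 := h1 (u x)
    rw [he] at h2
    by_contra hcon
    have := mul_pos hW (not_le.1 hcon)
    linarith
  · obtain ⟨t, ht0, ht1, htu, ht⟩ := h1
    have hiv := intermediate_value_Icc hlr hX.cont
    rw [hX.left, hX.right] at hiv
    obtain ⟨x, hx1, hx2⟩ := hiv ⟨ht0, ht1⟩
    refine ⟨x, hx1, fun h => htu (by rw [← hx2, h]), ?_⟩
    obtain ⟨W, hW, he⟩ := hX.QQ_eq Y hx1
    have h2 : QQ Y X t = 0 := ht
    rw [hx2, h2] at he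
    exact (mul_eq_zero.1 he.symm).resolve_left hW.ne'

theorem pairReal (h : Plane ≃ₜ Plane) {f g : ℝ → ℝ} (hf : Continuous f) (hg : Continuous g)
    {l r x₀ : ℝ} (hx : x₀ ∈ Ioo l r) (hc : Crosses f g x₀) {X Y u v}
    (hX : Param (Gam h f) l r X u) (hY : Param (Gam h g) l r Y v) :
    PairReal X Y (u x₀) (v x₀) := by
  have hx' := Ioo_subset_Icc_self hx
  have hG : Gam h f x₀ = Gam h g x₀ := by simp [Gam, hc.1]
  refine ⟨hX.mem_Ioo hx, hY.mem_Ioo hx, ?_, ?_, ?_⟩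
  · obtain ⟨W, -, hW⟩ := hX.QQ_eq Y hx'
    rw [hW, hG, hY.zero _ hx', mul_zero]
  · obtain ⟨W, -, hW⟩ := hY.QQ_eq X hx'
    rw [hW, ← hG, hX.zero _ hx', mul_zero]
  · by_contra hcon
    rw [not_or] at hcon
    obtain ⟨x, hx1, hx2, hx3⟩ := second_point h hf hg hx hc hX hY hcon.1
    obtain ⟨y, hy1, hy2, hy3⟩ := second_point h hg hf hx hc.symm hY hX hcon.2
    refine crossing_ge h hf hg hx hc hY.nondeg hY.zero fun z hz => ?_
    refine (three_points hX.nondeg hY.nondeg (p₁ := Gam h f x₀) (p₂ := Gam h f x) (p₃ := Gam h g y)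
      ?_ ?_ ?_ (hX.zero _ hx') (hX.zero _ hx1) hy3 ?_ hx3 (hY.zero _ hy1) (hX.zero z hz)).ge
    · exact fun e => hx2 (Gam_inj h e).1.symm
    · exact fun e => hy2 (Gam_inj h e).1.symm
    · intro e
      obtain ⟨e1, e2⟩ := Gam_inj h e
      rw [← e1] at e2
      exact hx2 (hc.unique e2)
    · rw [hG]; exact hY.zero _ hx'

theorem tripleReal (h : Plane ≃ₜ Plane) {fA fV fH : ℝ → ℝ} (cA : Continuous fA)
    (cV : Continuous fV) (cH : Continuous fH) {l r xAV xAH xVH : ℝ}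
    (h1 : xAV ∈ Ioo l r) (h2 : xAH ∈ Ioo l r) (h3 : xVH ∈ Ioo l r)
    (k1 : Crosses fA fV xAV) (k2 : Crosses fA fH xAH) {A V H a v w}
    (hA : Param (Gam h fA) l r A a) (hV : Param (Gam h fV) l r V v)
    (hH : Param (Gam h fH) l r H w) (b : Bool)
    (ht : b = true → xAH < xAV ∧ xAV < xVH) (hf : b = false → xVH < xAV ∧ xAV < xAH) :
    TripleReal b A V H ![v xVH, w xVH] := by
  have i1 := Ioo_subset_Icc_self h1
  have i2 := Ioo_subset_Icc_self h2
  have i3 := Ioo_subset_Icc_self h3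
  refine ⟨hV.mem_Ioo h3, hH.mem_Ioo h3, a xAV, v xAV, a xAH, w xAH,
    pairReal h cA cV h1 k1 hA hV, pairReal h cA cH h2 k2 hA hH, fun hb => ?_, fun hb => ?_⟩
  · obtain ⟨o1, o2⟩ := ht hb
    exact ⟨hA.mono i2 i1 o1, hV.mono i1 i3 o2, hH.mono i2 i3 (o1.trans o2)⟩
  · obtain ⟨o1, o2⟩ := hf hb
    exact ⟨hA.mono i1 i2 o2, hV.mono i3 i1 o1, hH.mono i3 i2 (o1.trans o2)⟩

/-- pieces lie on nondegenerate circles -/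
theorem piece_circ {P : Set Plane} (hP : IsArc P ∨ IsSegment P ∨ IsRay P) {p q : Plane}
    (hp : p ∈ P) (hq : q ∈ P) (hpq : p ≠ q) : ∃ a, NonDeg a ∧ ∀ z ∈ P, circ a z = 0 := by
  have line : ∀ c u : Plane, u ≠ 0 → ∃ a, NonDeg a ∧ ∀ z : Plane, (∃ t : ℝ, z = c + t • u) →
      circ a z = 0 := by
    intro c u hu
    refine ⟨![0, -u 1, u 0, u 1 * c 0 - u 0 * c 1], ?_, ?_⟩
    · simp [NonDeg]
      have : ¬ (u 0 = 0 ∧ u 1 = 0) := fun h => hu (Plane.ext2 (by simp [h.1]) (by simp [h.2]))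
      by_contra hcon
      exact this ⟨by nlinarith [sq_nonneg (u 0), sq_nonneg (u 1)],
        by nlinarith [sq_nonneg (u 0), sq_nonneg (u 1)]⟩
    · rintro z ⟨t, rfl⟩
      simp [circ]; ring
  rcases hP with ⟨c, r, hr, hs, -⟩ | ⟨c, d, rfl⟩ | ⟨c, u, hu, rfl⟩
  · refine ⟨![1, -2 * c 0, -2 * c 1, c 0 ^ 2 + c 1 ^ 2 - r ^ 2], ?_, ?_⟩
    · simp [NonDeg]; nlinarith [sq_pos_of_pos hr]
    · intro z hz
      have h1 := hs hz
      rw [mem_sphere_iff_norm, EuclideanSpace.norm_eq, Real.sqrt_eq_iff_eq_sq (by positivity) hr.le] at h1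
      simp [Fin.sum_univ_two] at h1
      simp [circ]
      linarith
  · have hcd : d - c ≠ 0 := by
      intro h
      have : d = c := sub_eq_zero.1 h
      subst this
      rw [segment_same] at hp hq
      exact hpq (hp.trans hq.symm)
    obtain ⟨a, ha, hz⟩ := line c (d - c) hcd
    refine ⟨a, ha, fun z hz' => hz z ?_⟩
    rw [segment_eq_image'] at hz'
    obtain ⟨t, -, rfl⟩ := hz'
    exact ⟨t, rfl⟩
  · obtain ⟨a, ha, hz⟩ := line c u hu
    refine ⟨a, ha, fun z hz' => hz z ?_⟩
    obtain ⟨t, -, rfl⟩ := hz'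
    exact ⟨t, rfl⟩

theorem piece_preconnected {P : Set Plane} (hP : IsArc P ∨ IsSegment P ∨ IsRay P) :
    IsPreconnected P := by
  rcases hP with ⟨c, r, hr, hs, h⟩ | ⟨c, d, rfl⟩ | ⟨c, u, hu, rfl⟩
  · exact h.isPreconnected
  · exact (convex_segment c d).isPreconnected
  · have : {p | ∃ t : ℝ, 0 ≤ t ∧ p = c + t • u} = (fun t : ℝ => c + t • u) '' Ici 0 := by
      ext p; constructor
      · rintro ⟨t, h1, rfl⟩; exact ⟨t, h1, rfl⟩
      · rintro ⟨t, h1, rfl⟩; exact ⟨t, h1, rfl⟩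
    rw [this]
    exact isPreconnected_Ici.image _ (by fun_prop)


def gr (f : ℝ → ℝ) : Set Plane := {p | p 1 = f (p 0)}

theorem mem_gr {f : ℝ → ℝ} {p : Plane} : p ∈ gr f ↔ p 1 = f (p 0) := Iff.rfl

def shear (f : ℝ → ℝ) (hf : Continuous f) : Plane ≃ₜ Plane where
  toFun p := !₂[p 0, p 1 + f (p 0)]
  invFun p := !₂[p 0, p 1 - f (p 0)]
  left_inv p := Plane.ext2 (by simp) (by simp)
  right_inv p := Plane.ext2 (by simp) (by simp)
  continuous_toFun := by
    refine (PiLp.continuous_toLp 2 _).comp (continuous_pi fun i => ?_)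
    have h0 : Continuous fun p : Plane => p 0 := PiLp.continuous_apply 2 _ 0
    have h1 : Continuous fun p : Plane => p 1 := PiLp.continuous_apply 2 _ 1
    fin_cases i
    · exact h0
    · exact h1.add (hf.comp h0)
  continuous_invFun := by
    refine (PiLp.continuous_toLp 2 _).comp (continuous_pi fun i => ?_)
    have h0 : Continuous fun p : Plane => p 0 := PiLp.continuous_apply 2 _ 0
    have h1 : Continuous fun p : Plane => p 1 := PiLp.continuous_apply 2 _ 1
    fin_cases i
    · exact h0
    · exact h1.sub (hf.comp h0)

theorem gr_pseudoline {f : ℝ → ℝ} (hf : Continuous f) : IsPseudoline (gr f) := by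
  refine ⟨shear f hf, {p | ∃ t : ℝ, p = 0 + t • (!₂[1, 0] : Plane)}, ⟨0, !₂[1, 0], ?_, rfl⟩, ?_⟩
  · intro h
    have := congrArg (fun p : Plane => p 0) h
    simp at this
  · ext p
    constructor
    · intro hp
      refine ⟨!₂[p 0, 0], ⟨p 0, Plane.ext2 (by simp) (by simp)⟩, ?_⟩
      exact Plane.ext2 (by simp [shear]) (by simpa [shear] using hp.symm)
    · rintro ⟨q, ⟨t, rfl⟩, rfl⟩
      simp [shear, gr]

theorem side_preconnected {g : ℝ → ℝ} (hg : Continuous g) (σ : ℝ) :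
    IsPreconnected {p : Plane | 0 < σ * (p 1 - g (p 0))} := by
  have h0 : IsPreconnected {y : ℝ | 0 < σ * y} := by
    apply Convex.isPreconnected
    exact convex_halfSpace_gt (f := fun y : ℝ => σ * y) ⟨fun x y => by ring, fun c x => by simp; ring⟩ 0
  have h1 : IsPreconnected ((univ : Set ℝ) ×ˢ {y : ℝ | 0 < σ * y}) := isPreconnected_univ.prod h0
  have h2 : Continuous fun z : ℝ × ℝ => (!₂[z.1, z.2 + g z.1] : Plane) := by
    refine (PiLp.continuous_toLp 2 _).comp (continuous_pi fun i => ?_)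
    fin_cases i
    · exact continuous_fst
    · exact continuous_snd.add (hg.comp continuous_fst)
  have h3 := h1.image _ h2.continuousOn
  convert h3 using 1
  ext p
  constructor
  · intro hp
    refine ⟨(p 0, p 1 - g (p 0)), ⟨trivial, hp⟩, Plane.ext2 (by simp) (by simp)⟩
  · rintro ⟨⟨x, y⟩, ⟨-, hy⟩, rfl⟩
    have hy' : 0 < σ * y := hy
    simpa using hy'

theorem cross_side {f g : ℝ → ℝ} (hg : Continuous g) {x₀ : ℝ} (hc : Crosses f g x₀)
    (x : Plane) (hx : x ∈ (gr g)ᶜ) : (gr f ∩ connectedComponentIn (gr g)ᶜ x).Nonempty := by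
  obtain ⟨-, s, h1, h2⟩ := hc
  have hx0 : x 1 - g (x 0) ≠ 0 := fun h => hx (by rw [mem_gr]; linarith)
  -- pick a point of the graph on the same side
  obtain ⟨y, hy⟩ : ∃ y, 0 < (x 1 - g (x 0)) * (f y - g y) := by
    have a1 := h1 (x₀ - 1) (by linarith)
    have a2 := h2 (x₀ + 1) (by linarith)
    by_cases hs : 0 < s * (x 1 - g (x 0))
    · refine ⟨x₀ + 1, ?_⟩
      have := mul_pos hs a2
      have e : s * (x 1 - g (x 0)) * (s * (f (x₀ + 1) - g (x₀ + 1))) =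
        s ^ 2 * ((x 1 - g (x 0)) * (f (x₀ + 1) - g (x₀ + 1))) := by ring
      rw [e] at this
      exact pos_of_mul_pos_right this (sq_nonneg s)
    · have hs0 : s ≠ 0 := by rintro rfl; simp at a1
      have hs' : s * (x 1 - g (x 0)) < 0 := lt_of_le_of_ne (not_lt.1 hs) (mul_ne_zero hs0 hx0)
      refine ⟨x₀ - 1, ?_⟩
      have := mul_pos_of_neg_of_neg hs' a1
      have e : s * (x 1 - g (x 0)) * (s * (f (x₀ - 1) - g (x₀ - 1))) =
        s ^ 2 * ((x 1 - g (x 0)) * (f (x₀ - 1) - g (x₀ - 1))) := by ring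
      rw [e] at this
      exact pos_of_mul_pos_right this (sq_nonneg s)
  refine ⟨!₂[y, f y], by simp [gr], ?_⟩
  refine (side_preconnected hg (x 1 - g (x 0))).subset_connectedComponentIn
    (x := x) ?_ ?_ ?_
  · exact mul_self_pos.2 hx0
  · intro p hp hpg
    rw [mem_gr] at hpg
    have hp' : 0 < (x 1 - g (x 0)) * (p 1 - g (p 0)) := hp
    rw [hpg] at hp'; simp at hp'
  · have hy2 : 0 < (x 1 - g (x 0)) * ((!₂[y, f y] : Plane) 1 - g ((!₂[y, f y] : Plane) 0)) := by
      simpa using hy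
    exact hy2

theorem graph_arrangement {n : ℕ} (f : Fin n → ℝ → ℝ) (hf : ∀ i, Continuous (f i))
    (hc : ∀ i j, i ≠ j → ∃ x₀, Crosses (f i) (f j) x₀) : IsArrangement (fun i => gr (f i)) := by
  refine ⟨⟨?_, fun i => gr_pseudoline (hf i), ?_, ?_⟩, ?_⟩
  · intro i j hij
    by_contra hne
    obtain ⟨x₀, h0, s, h1, h2⟩ := hc i j hne
    have h3 := h1 (x₀ - 1) (by linarith)
    have h4 : (!₂[x₀ - 1, f i (x₀ - 1)] : Plane) ∈ gr (f j) := by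
      have : (!₂[x₀ - 1, f i (x₀ - 1)] : Plane) ∈ gr (f i) := by simp [gr]
      have hij' : gr (f i) = gr (f j) := hij
      rw [← hij']; exact this
    rw [mem_gr] at h4
    simp at h4
    rw [h4] at h3
    simp at h3
  · intro i j hij p hp q hq
    obtain ⟨x₀, hx⟩ := hc i j hij
    have hp1 := mem_gr.1 hp.1
    have hp2 := mem_gr.1 hp.2
    have hq1 := mem_gr.1 hq.1
    have hq2 := mem_gr.1 hq.2
    have e1 := hx.unique (hp1.symm.trans hp2)
    have e2 := hx.unique (hq1.symm.trans hq2)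
    refine Plane.ext2 (e1.trans e2.symm) ?_
    rw [hp1, hq1, e1, e2]
  · intro i j hij p hp
    obtain ⟨x₀, hx⟩ := hc i j hij
    exact ⟨hp, cross_side (hf j) hx, cross_side (hf i) hx.symm⟩
  · intro i j hij
    obtain ⟨x₀, hx⟩ := hc i j hij
    exact ⟨!₂[x₀, f i x₀], by simp [gr], by simpa [gr] using hx.1⟩

theorem generic_shift {ι : Type} [Fintype ι] [DecidableEq ι] (g : ι → ℝ → ℝ) {η : ℝ} (hη : 0 < η)
    (hc : ∀ ε : ι → ℝ, (∀ i, |ε i| ≤ η) → ∀ i j, i ≠ j →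
      ∃ x₀, Crosses (fun x => g i x + ε i) (fun x => g j x + ε j) x₀) :
    ∃ ε : ι → ℝ, (∀ i, |ε i| ≤ η) ∧ ∀ i j k, i ≠ j → i ≠ k → j ≠ k → ∀ x,
      ¬ (g i x + ε i = g j x + ε j ∧ g i x + ε i = g k x + ε k) := by
  have main : ∀ S : Finset ι, ∃ ε : ι → ℝ, (∀ i, |ε i| ≤ η) ∧ ∀ i ∈ S, ∀ j ∈ S, ∀ k ∈ S,
      i ≠ j → i ≠ k → j ≠ k → ∀ x,
      ¬ (g i x + ε i = g j x + ε j ∧ g i x + ε i = g k x + ε k) := by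
    intro S
    induction S using Finset.induction_on with
    | empty => exact ⟨0, fun i => by simpa using hη.le, by simp⟩
    | insert a S haS ih =>
      obtain ⟨ε, h1, h2⟩ := ih
      have hfin : (⋃ p : ι × ι, ⋃ _ : p.1 ≠ p.2, (fun x => g p.1 x + ε p.1 - g a x) ''
          {x | g p.1 x + ε p.1 = g p.2 x + ε p.2}).Finite := by
        refine Set.finite_iUnion fun p => Set.finite_iUnion fun hp => Set.Finite.image _ ?_
        obtain ⟨x₀, hx₀⟩ := hc ε h1 p.1 p.2 hp
        refine (Set.finite_singleton x₀).subset fun x hx => ?_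
        exact hx₀.unique hx
      obtain ⟨e, he, heb⟩ := ((Set.Ioo_infinite hη).sdiff hfin).nonempty
      have heb' : ∀ i j, i ≠ j → ∀ x, g i x + ε i = g j x + ε j → g i x + ε i ≠ g a x + e := by
        intro i j hij x hx hxe
        apply heb
        simp only [mem_iUnion]
        exact ⟨(i, j), hij, x, hx, by simp only; linarith⟩
      refine ⟨Function.update ε a e, ?_, ?_⟩
      · intro i
        by_cases hi : i = a
        · subst hi; simp [abs_of_pos he.1, he.2.le]
        · simp [hi, h1 i]
      · intro i hi j hj k hk hij hik hjk x ⟨e1, e2⟩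
        by_cases ia : i = a
        · subst ia
          have ja : j ≠ i := hij.symm
          have ka : k ≠ i := hik.symm
          simp only [Function.update_self, Function.update_of_ne ja, Function.update_of_ne ka] at e1 e2
          exact heb' j k hjk x (e1.symm.trans e2) e1.symm
        · by_cases ja : j = a
          · subst ja
            have ka : k ≠ j := hjk.symm
            simp only [Function.update_self, Function.update_of_ne ia, Function.update_of_ne ka] at e1 e2
            exact heb' i k hik x e2 e1
          · by_cases ka : k = a
            · subst ka
              simp only [Function.update_self, Function.update_of_ne ia, Function.update_of_ne ja] at e1 e2
              exact heb' i j hij x e1 e2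
            · simp only [Function.update_of_ne ia, Function.update_of_ne ja, Function.update_of_ne ka] at e1 e2
              exact h2 i ((Finset.mem_insert.1 hi).resolve_left ia) j
                ((Finset.mem_insert.1 hj).resolve_left ja) k
                ((Finset.mem_insert.1 hk).resolve_left ka) hij hik hjk x ⟨e1, e2⟩
  obtain ⟨ε, h1, h2⟩ := main Finset.univ
  exact ⟨ε, h1, fun i j k => h2 i (Finset.mem_univ _) j (Finset.mem_univ _) k (Finset.mem_univ _)⟩


def tent (x : ℝ) : ℝ := max 0 (1 - 2 * |x|)

theorem tent_cont : Continuous tent := by unfold tent; fun_prop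

theorem tent_nonneg (x : ℝ) : 0 ≤ tent x := le_max_left _ _

theorem tent_le (x : ℝ) : tent x ≤ 1 := max_le (by norm_num) (by linarith [abs_nonneg x])

theorem tent_zero {x : ℝ} (hx : 1 / 2 ≤ |x|) : tent x = 0 := max_eq_left (by linarith)

theorem tent_half {x : ℝ} (hx : |x| ≤ 1 / 4) : 1 / 2 ≤ tent x := le_max_of_le_right (by linarith)

theorem tent_lip (x y : ℝ) : |tent x - tent y| ≤ 2 * |x - y| := by
  unfold tent
  refine (abs_max_sub_max_le_max _ _ _ _).trans ?_
  have := abs_abs_sub_abs_le_abs_sub x y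
  rw [sub_self, abs_zero]
  refine max_le (by positivity) ?_
  rw [show (1 - 2 * |x|) - (1 - 2 * |y|) = -2 * (|x| - |y|) by ring, abs_mul]
  norm_num
  exact this

def bump (N : ℕ) (δ : ℝ) (σ : ℕ → ℝ) (x : ℝ) : ℝ :=
  δ * ∑ m ∈ Finset.range N, σ m * tent (x - m)

theorem bump_cont (N δ σ) : Continuous (bump N δ σ) := by
  unfold bump
  refine continuous_const.mul (continuous_finsetSum _ fun m _ => continuous_const.mul ?_)
  exact tent_cont.comp (continuous_id.sub continuous_const)

theorem bump_lip {N : ℕ} {δ : ℝ} {σ : ℕ → ℝ} (hδ : 0 ≤ δ) (hN : δ * N ≤ 1 / 16)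
    (hσ : ∀ m, |σ m| ≤ 1) (x y : ℝ) : |bump N δ σ x - bump N δ σ y| ≤ 1 / 8 * |x - y| := by
  unfold bump
  rw [← mul_sub, ← Finset.sum_sub_distrib, abs_mul, abs_of_nonneg hδ]
  have h1 : |∑ m ∈ Finset.range N, (σ m * tent (x - m) - σ m * tent (y - m))| ≤ N * (2 * |x - y|) := by
    refine (Finset.abs_sum_le_sum_abs _ _).trans ?_
    refine (Finset.sum_le_card_nsmul _ _ (2 * |x - y|) fun m _ => ?_).trans (by simp)
    rw [← mul_sub, abs_mul]
    have h2 := tent_lip (x - m) (y - m)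
    rw [show x - (m:ℝ) - (y - m) = x - y by ring] at h2
    calc _ ≤ 1 * |tent (x - m) - tent (y - m)| := by gcongr; exact hσ m
      _ ≤ _ := by rw [one_mul]; exact h2
  calc _ ≤ δ * (N * (2 * |x - y|)) := by gcongr
    _ = (δ * N) * (2 * |x - y|) := by ring
    _ ≤ 1 / 16 * (2 * |x - y|) := by gcongr
    _ = _ := by ring

theorem bump_le {N : ℕ} {δ : ℝ} {σ : ℕ → ℝ} (hδ : 0 ≤ δ) (hN : δ * N ≤ 1 / 16)
    (hσ : ∀ m, |σ m| ≤ 1) (x : ℝ) : |bump N δ σ x| ≤ 1 / 16 := by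
  unfold bump
  rw [abs_mul, abs_of_nonneg hδ]
  have h1 : |∑ m ∈ Finset.range N, σ m * tent (x - m)| ≤ N := by
    refine (Finset.abs_sum_le_sum_abs _ _).trans ?_
    refine (Finset.sum_le_card_nsmul _ _ 1 fun m _ => ?_).trans (by simp)
    rw [abs_mul, abs_of_nonneg (tent_nonneg _)]
    exact mul_le_one₀ (hσ m) (tent_nonneg _) (tent_le _)
  calc _ ≤ δ * N := by gcongr
    _ ≤ _ := hN

theorem bump_left {N : ℕ} {δ : ℝ} {σ : ℕ → ℝ} {x : ℝ} (hx : x ≤ -1) : bump N δ σ x = 0 := by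
  unfold bump
  rw [Finset.sum_eq_zero, mul_zero]
  intro m _
  have hm : (0:ℝ) ≤ m := Nat.cast_nonneg m
  rw [tent_zero, mul_zero]
  rw [abs_of_nonpos] <;> linarith

theorem bump_near {N : ℕ} {δ : ℝ} {σ : ℕ → ℝ} {x : ℝ} {m : ℕ} (hm : m < N) (hx : |x - m| ≤ 1 / 4) :
    bump N δ σ x = δ * (σ m * tent (x - m)) := by
  unfold bump
  rw [Finset.sum_eq_single m]
  · intro b _ hb
    rw [tent_zero, mul_zero]
    have h1 : (1:ℝ) ≤ |(m:ℝ) - b| := by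
      have : (1:ℤ) ≤ |(m:ℤ) - b| := Int.one_le_abs (by omega)
      exact_mod_cast this
    have h2 : |(m:ℝ) - b| ≤ |x - b| + |x - m| := by
      have := abs_sub_le (m:ℝ) x b
      rw [abs_sub_comm (m:ℝ) x] at this
      linarith
    linarith
  · intro h; exact absurd (Finset.mem_range.2 hm) h

theorem bump_zero {N : ℕ} {δ : ℝ} {σ : ℕ → ℝ} (h : ∀ m, σ m = 0) (x : ℝ) : bump N δ σ x = 0 := by
  unfold bump; simp [h]

/-- functions growing at linear rate change sign exactly once -/
theorem sign_change {φ : ℝ → ℝ} (hφ : Continuous φ) {c : ℝ} (hc : 0 < c)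
    (h : ∀ x y, x ≤ y → c * (y - x) ≤ φ y - φ x) :
    ∃ x₀, φ x₀ = 0 ∧ (∀ x, x < x₀ → φ x < 0) ∧ (∀ x, x₀ < x → 0 < φ x) := by
  have hA : 0 ≤ |φ 0| / c := by positivity
  have hAc : c * (|φ 0| / c) = |φ 0| := by field_simp
  have h1 := h (-(|φ 0| / c)) 0 (by linarith)
  have h2 := h 0 (|φ 0| / c) hA
  have h3 : (0:ℝ) ∈ Icc (φ (-(|φ 0| / c))) (φ (|φ 0| / c)) := by
    constructor
    · have := le_abs_self (φ 0)
      nlinarith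
    · have := neg_abs_le (φ 0)
      nlinarith
  obtain ⟨x₀, -, hx⟩ := intermediate_value_Icc (by linarith) hφ.continuousOn h3
  refine ⟨x₀, hx, fun x hxx => ?_, fun x hxx => ?_⟩
  · have := h x x₀ hxx.le
    have := mul_pos hc (sub_pos.2 hxx)
    linarith
  · have := h x₀ x hxx.le
    have := mul_pos hc (sub_pos.2 hxx)
    linarith

/-- the unperturbed curves -/
noncomputable def gfun (N T : ℕ) (δ : ℝ) (σ : ℕ → ℕ → ℕ → ℝ) (s t : ℕ) (x : ℝ) : ℝ :=
  s * x + t * (1 + 1 / (4 * T) * min 0 (x + 1)) + bump N δ (fun m => σ m s t) x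

theorem gfun_cont (N T δ σ s t) : Continuous (gfun N T δ σ s t) := by
  unfold gfun
  have := bump_cont N δ (fun m => σ m s t)
  fun_prop

section
variable {N T : ℕ} {δ : ℝ} {σ : ℕ → ℕ → ℕ → ℝ}

theorem gfun_inc (hT : 0 < T) (hδ : 0 ≤ δ) (hN : δ * N ≤ 1 / 16)
    (hσ : ∀ m s t, |σ m s t| ≤ 1) {s s' t t' : ℕ} (hs : s < s') (ht : t < T)
    (x y : ℝ) (hxy : x ≤ y) :
    1 / 2 * (y - x) ≤ (gfun N T δ σ s' t' y - gfun N T δ σ s t y)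
      - (gfun N T δ σ s' t' x - gfun N T δ σ s t x) := by
  have b1 := abs_le.1 (bump_lip hδ hN (fun m => hσ m s t) x y)
  have b2 := abs_le.1 (bump_lip hδ hN (fun m => hσ m s' t') x y)
  rw [abs_of_nonpos (by linarith)] at b1 b2
  obtain ⟨μ, hμ⟩ : ∃ μ, μ = min 0 (y + 1) - min 0 (x + 1) := ⟨_, rfl⟩
  have m0 : 0 ≤ μ := by
    have : min 0 (x + 1) ≤ min 0 (y + 1) := min_le_min le_rfl (by linarith)
    linarith
  have m1 : μ ≤ y - x := by
    rw [hμ]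
    rcases le_total 0 (y + 1) with h | h <;> rcases le_total 0 (x + 1) with h' | h' <;>
      simp [h, h'] <;> linarith
  have hT' : (0:ℝ) < T := by exact_mod_cast hT
  have ht' : (t:ℝ) * (1 / (4 * T)) ≤ 1 / 4 := by
    have : (t:ℝ) ≤ T := by exact_mod_cast ht.le
    rw [mul_one_div, div_le_iff₀ (by positivity)]
    linarith
  have hs' : (s:ℝ) + 1 ≤ s' := by exact_mod_cast hs
  have e1 : (1:ℝ) * (y - x) ≤ (s' - s) * (y - x) :=
    mul_le_mul_of_nonneg_right (by linarith) (by linarith)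
  have e2 : 0 ≤ (t':ℝ) * (1 / (4 * T)) * μ := by positivity
  have e3 : (t:ℝ) * (1 / (4 * T)) * μ ≤ 1 / 4 * (y - x) :=
    (mul_le_mul_of_nonneg_right ht' m0).trans (by linarith)
  have key : (gfun N T δ σ s' t' y - gfun N T δ σ s t y)
      - (gfun N T δ σ s' t' x - gfun N T δ σ s t x) = (s' - s) * (y - x)
      + (t':ℝ) * (1 / (4 * T)) * μ - (t:ℝ) * (1 / (4 * T)) * μ
      + (bump N δ (fun m => σ m s' t') y - bump N δ (fun m => σ m s' t') x)
      - (bump N δ (fun m => σ m s t) y - bump N δ (fun m => σ m s t) x) := by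
    rw [hμ]; unfold gfun; ring
  rw [key]
  linarith [b1.1, b1.2, b2.1, b2.2]

theorem gfun_sign (hT : 0 < T) (hδ : 0 ≤ δ) (hN : δ * N ≤ 1 / 16)
    (hσ : ∀ m s t, |σ m s t| ≤ 1) {s s' t t' : ℕ} (hs : s < s') (ht : t < T) (e e' : ℝ) :
    ∃ x₀, Crosses (fun x => gfun N T δ σ s' t' x + e') (fun x => gfun N T δ σ s t x + e) x₀ ∧
      (∀ x, x < x₀ → gfun N T δ σ s' t' x + e' < gfun N T δ σ s t x + e) ∧
      (∀ x, x₀ < x → gfun N T δ σ s t x + e < gfun N T δ σ s' t' x + e') := by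
  obtain ⟨x₀, h0, h1, h2⟩ := sign_change
    (φ := fun x => (gfun N T δ σ s' t' x + e') - (gfun N T δ σ s t x + e))
    (((gfun_cont _ _ _ _ _ _).add continuous_const).sub ((gfun_cont _ _ _ _ _ _).add continuous_const))
    (c := 1 / 2) (by norm_num)
    (fun x y hxy => by have := gfun_inc hT hδ hN hσ hs ht (t' := t') x y hxy; linarith)
  refine ⟨x₀, ⟨sub_eq_zero.1 h0, 1, fun x hx => ?_, fun x hx => ?_⟩, fun x hx => sub_neg.1 (h1 x hx),
    fun x hx => sub_pos.1 (h2 x hx)⟩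
  · rw [one_mul]; exact h1 x hx
  · rw [one_mul]; exact h2 x hx

theorem gfun_same (hT : 0 < T) (hδ : 0 ≤ δ) (hN : δ * N ≤ 1 / 16)
    (hσ : ∀ m s t, |σ m s t| ≤ 1) {s t t' : ℕ} (ht : t < t') {e e' : ℝ} (he : |e| ≤ 1 / 8)
    (he' : |e'| ≤ 1 / 8) :
    ∃ x₀, Crosses (fun x => gfun N T δ σ s t' x + e') (fun x => gfun N T δ σ s t x + e) x₀ := by
  rw [abs_le] at he he'
  have hT' : (0:ℝ) < T := by exact_mod_cast hT
  obtain ⟨D, hD⟩ : ∃ D : ℝ, D = (t':ℝ) - t := ⟨_, rfl⟩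
  have hD1 : 1 ≤ D := by
    have : (t:ℝ) + 1 ≤ t' := by exact_mod_cast ht
    linarith
  obtain ⟨ρ, hρ⟩ : ∃ ρ : ℝ, ρ = 1 / (4 * T) := ⟨_, rfl⟩
  have hρ0 : 0 < ρ := by rw [hρ]; positivity
  obtain ⟨x₀, hx₀⟩ : ∃ x₀ : ℝ, x₀ = -1 - (D + (e' - e)) / (D * ρ) := ⟨_, rfl⟩
  have hq : 0 < (D + (e' - e)) / (D * ρ) := div_pos (by linarith) (by positivity)
  have hx1 : x₀ < -1 := by linarith
  have hL : ∀ x, x ≤ -1 → (gfun N T δ σ s t' x + e') - (gfun N T δ σ s t x + e) =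
      D * ρ * (x - x₀) := by
    intro x hx
    unfold gfun
    rw [bump_left hx, bump_left hx, min_eq_right (by linarith), ← hρ]
    have : D * ρ * (x - x₀) = D * ρ * (x + 1) + (D + (e' - e)) := by
      rw [hx₀]; field_simp; ring
    rw [this, hD]; ring
  have hR : ∀ x, -1 ≤ x → 0 < (gfun N T δ σ s t' x + e') - (gfun N T δ σ s t x + e) := by
    intro x hx
    unfold gfun
    have b1 := abs_le.1 (bump_le hδ hN (fun m => hσ m s t) x)
    have b2 := abs_le.1 (bump_le hδ hN (fun m => hσ m s t') x)
    rw [min_eq_left (by linarith)]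
    linarith [b1.1, b1.2, b2.1, b2.2]
  have hDρ : 0 < D * ρ := by positivity
  refine ⟨x₀, sub_eq_zero.1 ?_, 1, fun x hx => ?_, fun x hx => ?_⟩
  · rw [hL x₀ hx1.le]; ring
  · rw [one_mul, hL x (by linarith)]
    exact mul_neg_of_pos_of_neg hDρ (by linarith)
  · rw [one_mul]
    rcases le_total x (-1) with h | h
    · rw [hL x h]; exact mul_pos hDρ (by linarith)
    · exact hR x h

end

set_option maxHeartbeats 2000000 in
/-- Existence of the simple arrangement with prescribed local orientations. -/
theorem exists_curves (k N T : ℕ) (hN0 : 0 < N) (hT : 0 < T)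
    (σ : ℕ → ℕ → ℕ → ℝ) (hσ : ∀ m s t, |σ m s t| ≤ 1) (hσ0 : ∀ m s t, s < 2 → σ m s t = 0) :
    ∃ f : Fin (k + 2) × Fin T → ℝ → ℝ, (∀ i, Continuous (f i)) ∧
      (∀ i j, i ≠ j → ∃ x₀, Crosses (f i) (f j) x₀) ∧
      (∀ i j l, i ≠ j → i ≠ l → j ≠ l → ∀ x, ¬ (f i x = f j x ∧ f i x = f l x)) ∧
      ∀ m < N, ∀ tV tH : Fin T, (tV : ℕ) = tH + m →
        ∃ xVH ∈ Ioo ((m:ℝ) - 1 / 4) (m + 1 / 4), ∀ (s : Fin (k + 2)) (t : Fin T), 2 ≤ (s : ℕ) →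
          (tV : ℕ) = t + s * m →
          ∃ xAV ∈ Ioo ((m:ℝ) - 1 / 4) (m + 1 / 4), ∃ xAH ∈ Ioo ((m:ℝ) - 1 / 4) (m + 1 / 4),
            Crosses (f (s, t)) (f (0, tV)) xAV ∧ Crosses (f (s, t)) (f (1, tH)) xAH ∧
            (σ m s t = 1 → xAH < xAV ∧ xAV < xVH) ∧ (σ m s t = -1 → xVH < xAV ∧ xAV < xAH) := by
  obtain ⟨δ, hδd⟩ : ∃ δ : ℝ, δ = 1 / (16 * N) := ⟨_, rfl⟩
  have hN' : (1:ℝ) ≤ N := by exact_mod_cast hN0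
  have hδ : 0 < δ := by rw [hδd]; positivity
  have hN : δ * N ≤ 1 / 16 := by rw [hδd]; field_simp; norm_num
  have hδ1 : δ ≤ 1 / 16 := by nlinarith
  obtain ⟨η, hηd⟩ : ∃ η : ℝ, η = δ / (8 * (k + 3)) := ⟨_, rfl⟩
  have hη : 0 < η := by rw [hηd]; positivity
  have hη1 : 8 * ((k + 3) * η) = δ := by rw [hηd]; field_simp
  have hη2 : η ≤ δ / 24 := by
    have : (0:ℝ) ≤ k * η := by positivity
    nlinarith
  have hcr : ∀ ε : Fin (k + 2) × Fin T → ℝ, (∀ i, |ε i| ≤ η) → ∀ i j, i ≠ j →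
      ∃ x₀, Crosses (fun x => gfun N T δ σ i.1 i.2 x + ε i) (fun x => gfun N T δ σ j.1 j.2 x + ε j) x₀ := by
    rintro ε hε ⟨s, t⟩ ⟨s', t'⟩ hij
    rcases lt_trichotomy s s' with h | h | h
    · obtain ⟨x, hx, -⟩ := gfun_sign hT hδ.le hN hσ (Fin.lt_def.1 h) t.2 (t' := t') (ε (s, t)) (ε (s', t'))
      exact ⟨x, hx.symm⟩
    · subst h
      have hb : ∀ i, |ε i| ≤ 1 / 8 := fun i => (hε i).trans (by linarith)
      rcases lt_trichotomy t t' with h | h | h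
      · obtain ⟨x, hx⟩ := gfun_same hT hδ.le hN hσ (s := s) (Fin.lt_def.1 h) (hb (s, t)) (hb (s, t'))
        exact ⟨x, hx.symm⟩
      · subst h; exact absurd rfl hij
      · exact gfun_same hT hδ.le hN hσ (s := s) (Fin.lt_def.1 h) (hb (s, t')) (hb (s, t))
    · obtain ⟨x, hx, -⟩ := gfun_sign hT hδ.le hN hσ (Fin.lt_def.1 h) t'.2 (t' := t) (ε (s', t')) (ε (s, t))
      exact ⟨x, hx⟩
  obtain ⟨ε, hε, hgen⟩ := generic_shift
    (fun i : Fin (k + 2) × Fin T => gfun N T δ σ i.1 i.2) hη hcr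
  refine ⟨fun i x => gfun N T δ σ i.1 i.2 x + ε i, fun i => (gfun_cont _ _ _ _ _ _).add continuous_const,
    hcr ε hε, hgen, ?_⟩
  intro m hm tV tH hVH
  have hm0 : (0:ℝ) ≤ m := Nat.cast_nonneg m
  have hVH' : (tV:ℝ) = tH + m := by exact_mod_cast hVH
  have bV := abs_le.1 (hε (0, tV))
  have bH := abs_le.1 (hε (1, tH))
  obtain ⟨εV, hεV⟩ : ∃ e, e = ε (0, tV) := ⟨_, rfl⟩
  obtain ⟨εH, hεH⟩ : ∃ e, e = ε (1, tH) := ⟨_, rfl⟩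
  rw [← hεV] at bV
  rw [← hεH] at bH
  have fV : ∀ x : ℝ, -1 ≤ x → gfun N T δ σ 0 tV x + εV = tV + εV := by
    intro x hx
    unfold gfun
    rw [bump_zero (fun m => hσ0 m 0 tV (by norm_num)), min_eq_left (by linarith)]
    simp
  have fH : ∀ x : ℝ, -1 ≤ x → gfun N T δ σ 1 tH x + εH = x + tH + εH := by
    intro x hx
    unfold gfun
    rw [bump_zero (fun m => hσ0 m 1 tH (by norm_num)), min_eq_left (by linarith)]
    simp
  obtain ⟨xVH, hx⟩ : ∃ x, x = (m:ℝ) + εV - εH := ⟨_, rfl⟩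
  refine ⟨xVH, ⟨by linarith, by linarith⟩, ?_⟩
  intro s t hs hst
  have bA := abs_le.1 (hε (s, t))
  obtain ⟨εA, hεA⟩ : ∃ e, e = ε (s, t) := ⟨_, rfl⟩
  rw [← hεA] at bA
  have hst' : (tV:ℝ) = t + s * m := by exact_mod_cast hst
  have hs2 : (2:ℝ) ≤ (s:ℕ) := by exact_mod_cast hs
  have hsk : ((s:ℕ):ℝ) ≤ k + 1 := by
    have := s.2
    have h2 : (s:ℕ) ≤ k + 1 := by omega
    exact_mod_cast h2
  have fA : ∀ x : ℝ, |x - m| ≤ 1 / 4 →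
      gfun N T δ σ s t x + εA = s * (x - m) + tV + δ * (σ m s t * tent (x - m)) + εA := by
    intro x hx
    have := (abs_le.1 hx).1
    unfold gfun
    rw [bump_near hm hx, min_eq_left (by linarith), hst']
    ring
  have bb : ∀ x : ℝ, |δ * (σ m s t * tent (x - m))| ≤ δ := by
    intro x
    rw [abs_mul, abs_of_pos hδ, abs_mul, abs_of_nonneg (tent_nonneg _)]
    have := mul_le_one₀ (hσ m s t) (tent_nonneg (x - m)) (tent_le _)
    nlinarith
  obtain ⟨xAV, c1, n1, p1⟩ := gfun_sign hT hδ.le hN hσ (s := 0) (s' := s) (by omega) tV.2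
    (t' := t) εV εA
  obtain ⟨xAH, c2, n2, p2⟩ := gfun_sign hT hδ.le hN hσ (s := 1) (s' := s) (by omega) tH.2
    (t' := t) εH εA
  have hr : |((m:ℝ) + 1 / 4) - m| ≤ 1 / 4 := by rw [abs_of_nonneg] <;> linarith
  have hl : |((m:ℝ) - 1 / 4) - m| ≤ 1 / 4 := by rw [abs_of_nonpos] <;> linarith
  have Ar := fA _ hr
  have Al := fA _ hl
  have br := abs_le.1 (bb (m + 1 / 4))
  have bl := abs_le.1 (bb (m - 1 / 4))
  have Vr := fV (m + 1 / 4) (by linarith)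
  have Vl := fV (m - 1 / 4) (by linarith)
  have Hr := fH (m + 1 / 4) (by linarith)
  have Hl := fH (m - 1 / 4) (by linarith)
  have r1 : xAV < m + 1 / 4 := by
    by_contra hcon
    rcases eq_or_lt_of_le (not_lt.1 hcon) with h | h
    · have := c1.1
      rw [← h] at this
      linarith [br.1]
    · have := n1 _ h
      linarith [br.1]
  have l1 : (m:ℝ) - 1 / 4 < xAV := by
    by_contra hcon
    rcases eq_or_lt_of_le (not_lt.1 hcon) with h | h
    · have := c1.1
      rw [h] at this
      linarith [bl.2]
    · have := p1 _ h
      linarith [bl.2]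
  have r2 : xAH < m + 1 / 4 := by
    by_contra hcon
    rcases eq_or_lt_of_le (not_lt.1 hcon) with h | h
    · have := c2.1
      rw [← h] at this
      linarith [br.1]
    · have := n2 _ h
      linarith [br.1]
  have l2 : (m:ℝ) - 1 / 4 < xAH := by
    by_contra hcon
    rcases eq_or_lt_of_le (not_lt.1 hcon) with h | h
    · have := c2.1
      rw [h] at this
      linarith [bl.2]
    · have := p2 _ h
      linarith [bl.2]
  have hxm : |xVH - m| ≤ 1 / 4 := by rw [abs_le]; constructor <;> linarith
  have Ax := fA xVH hxm
  have Vx := fV xVH (by linarith)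
  have th := tent_half hxm
  have VAV := fV xAV (by linarith)
  have HAV := fH xAV (by linarith)
  have E1 : ((s:ℕ):ℝ) * (xVH - m) ≤ 2 * ((k + 1) * η) := by
    have : xVH - m ≤ 2 * η := by linarith [bV.1, bV.2, bH.1, bH.2]
    have h2 : ((s:ℕ):ℝ) * (xVH - m) ≤ s * (2 * η) := by gcongr
    have h3 : ((s:ℕ):ℝ) * (2 * η) ≤ (k + 1) * (2 * η) := by gcongr
    linarith
  have E2 : -(2 * ((k + 1) * η)) ≤ ((s:ℕ):ℝ) * (xVH - m) := by
    have : -(2 * η) ≤ xVH - m := by linarith [bV.1, bV.2, bH.1, bH.2]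
    have h2 : ((s:ℕ):ℝ) * (-(2 * η)) ≤ s * (xVH - m) := by gcongr
    have h3 : ((s:ℕ):ℝ) * (2 * η) ≤ (k + 1) * (2 * η) := by gcongr
    linarith
  have E3 : δ / 2 ≤ δ * tent (xVH - m) := by nlinarith
  have cross1 := c1.1
  simp only at cross1
  refine ⟨xAV, ⟨l1, r1⟩, xAH, ⟨l2, r2⟩, ?_, ?_, ?_, ?_⟩
  · rw [hεV, hεA] at c1; exact c1
  · rw [hεH, hεA] at c2; exact c2
  · intro h
    rw [h, one_mul] at Ax
    have o : xAV < xVH := by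
      by_contra hcon
      rcases eq_or_lt_of_le (not_lt.1 hcon) with h | h
      · rw [← h] at cross1
        linarith
      · have := n1 _ h
        linarith
    refine ⟨?_, o⟩
    by_contra hcon
    rcases eq_or_lt_of_le (not_lt.1 hcon) with h | h
    · have := c2.1
      rw [← h] at this
      simp only at this
      linarith
    · have := n2 _ h
      linarith
  · intro h
    rw [h, neg_one_mul] at Ax
    have o : xVH < xAV := by
      by_contra hcon
      rcases eq_or_lt_of_le (not_lt.1 hcon) with h | h
      · rw [h] at cross1
        linarith
      · have := p1 _ h
        linarith
    refine ⟨o, ?_⟩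
    by_contra hcon
    rcases eq_or_lt_of_le (not_lt.1 hcon) with h | h
    · have := c2.1
      rw [h] at this
      simp only at this
      linarith
    · have := p2 _ h
      linarith


/-- `a` is bad for the curve `f`: no circle or line contains the whole part above `I_a` -/
def Bad (k : ℕ) (h : Plane ≃ₜ Plane) (f : ℝ → ℝ) (a : ℕ) : Prop :=
  ¬ ∃ c, NonDeg c ∧ ∀ x ∈ Icc ((k:ℝ) * a - 1 / 4) ((k:ℝ) * a + k - 1 / 4), circ c (Gam h f x) = 0

theorem charge {k M : ℕ} (hk : 0 < k) (h : Plane ≃ₜ Plane) {f : ℝ → ℝ} {m : ℕ}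
    (hd : HasPieceDecomposition (h '' gr f) m) (F : Finset (Fin M)) (hF : ∀ a ∈ F, Bad k h f a) :
    F.card ≤ m := by
  obtain ⟨P, hP, hU⟩ := hd
  have hk' : (0:ℝ) < k := by exact_mod_cast hk
  have hex : ∀ a : Fin M, ∃ q, Gam h f ((k:ℝ) * (a:ℕ) - 1 / 4) ∈ P q := by
    intro a
    have : Gam h f ((k:ℝ) * (a:ℕ) - 1 / 4) ∈ h '' gr f := ⟨_, by simp [gr], rfl⟩
    rw [hU] at this
    exact mem_iUnion.1 this
  choose q hq using hex
  have key : ∀ a ∈ F, ∀ a' ∈ F, a < a' → q a ≠ q a' := by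
    intro a ha a' _ hlt he
    have hlt' : ((a:ℕ):ℝ) + 1 ≤ (a':ℕ) := by exact_mod_cast (Fin.lt_def.1 hlt)
    have hmul : (k:ℝ) * (a:ℕ) + k ≤ k * (a':ℕ) := by nlinarith
    have h1 := hq a
    have h2 := hq a'
    rw [← he] at h2
    have hcont : Continuous fun p : Plane => (h.symm p) 0 :=
      (PiLp.continuous_apply 2 _ 0).comp h.symm.continuous
    have hpre := ((piece_preconnected (hP (q a))).image _ hcont.continuousOn)
    have e1 : ((k:ℝ) * (a:ℕ) - 1 / 4) ∈ (fun p : Plane => (h.symm p) 0) '' P (q a) :=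
      ⟨_, h1, by simp [Gam]⟩
    have e2 : ((k:ℝ) * (a':ℕ) - 1 / 4) ∈ (fun p : Plane => (h.symm p) 0) '' P (q a) :=
      ⟨_, h2, by simp [Gam]⟩
    obtain ⟨c, hc, hz⟩ := piece_circ (hP (q a)) h1 h2 (by
      intro e
      have := Gam_injective h f e
      linarith)
    refine hF a ha ⟨c, hc, fun x hx => hz _ ?_⟩
    obtain ⟨p, hp, hpx⟩ := hpre.Icc_subset e1 e2 (show x ∈ Icc _ _ from ⟨hx.1, by linarith [hx.2]⟩)
    have hpU : p ∈ h '' gr f := by rw [hU]; exact mem_iUnion.2 ⟨_, hp⟩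
    obtain ⟨z, hz', rfl⟩ := hpU
    have hx0 : z 0 = x := by simpa using hpx
    have : Gam h f x = h z := by
      unfold Gam
      congr 1
      refine Plane.ext2 (by simp [hx0]) ?_
      rw [mem_gr.1 hz', hx0]; simp
    rw [this]; exact hp
  have hinj : Set.InjOn q F := by
    intro a ha a' ha' he
    rcases lt_trichotomy a a' with hl | hl | hl
    · exact absurd he (key a ha a' ha' hl)
    · exact hl
    · exact absurd he.symm (key a' ha' a ha hl)
  calc F.card ≤ (Finset.univ : Finset (Fin m)).card :=
        Finset.card_le_card_of_injOn q (fun _ _ => Finset.mem_coe.2 (Finset.mem_univ _)) hinj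
    _ = m := by simp

theorem wt_aux {k M a b s τ : ℕ} (ha : a < M) (hb : b < M) (hs : s < k + 2)
    (hτ : τ < 2 * k ^ 2) :
    (2 * k ^ 2 * (b + M) + τ - (s * (k * a) + k ^ 2)) + (s * (k * a) + k ^ 2)
      = 2 * k ^ 2 * (b + M) + τ ∧
    2 * k ^ 2 * (b + M) + τ - (s * (k * a) + k ^ 2) < 4 * k ^ 2 * M := by
  have hk : 0 < k := by
    rcases Nat.eq_zero_or_pos k with h | h
    · subst h; simp at hτ
    · exact h
  have h1 : s * (k * a) + k ^ 2 ≤ 2 * k ^ 2 * (b + M) := by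
    have hs' : s ≤ 2 * k := by omega
    have : s * (k * a) ≤ 2 * k * (k * a) := Nat.mul_le_mul_right _ hs'
    have h2 : 2 * k * (k * a) + 2 * k ^ 2 ≤ 2 * k ^ 2 * (b + M) := by
      have : a + 1 ≤ b + M := by omega
      calc 2 * k * (k * a) + 2 * k ^ 2 = 2 * k ^ 2 * (a + 1) := by ring
        _ ≤ _ := Nat.mul_le_mul_left _ this
    omega
  refine ⟨by omega, ?_⟩
  have h3 : 2 * k ^ 2 * (b + M) + 2 * k ^ 2 ≤ 4 * k ^ 2 * M := by
    have : b + M + 1 ≤ 2 * M := by omega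
    calc 2 * k ^ 2 * (b + M) + 2 * k ^ 2 = 2 * k ^ 2 * (b + M + 1) := by ring
      _ ≤ 2 * k ^ 2 * (2 * M) := Nat.mul_le_mul_left _ this
      _ = _ := by ring
  omega

def wt (k M : ℕ) (a b : Fin M) (p : Fin (k + 2) × Fin (2 * k ^ 2)) : Fin (4 * k ^ 2 * M) :=
  ⟨2 * k ^ 2 * (b + M) + p.2 - (p.1 * (k * a) + k ^ 2), (wt_aux a.2 b.2 p.1.2 p.2.2).2⟩

theorem wt_eq (k M : ℕ) (a b : Fin M) (p : Fin (k + 2) × Fin (2 * k ^ 2)) :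
    (wt k M a b p : ℕ) + (p.1 * (k * a) + k ^ 2) = 2 * k ^ 2 * (b + M) + p.2 :=
  (wt_aux a.2 b.2 p.1.2 p.2.2).1

theorem wt_det {k M : ℕ} {a b b' : Fin M} {p p' : Fin (k + 2) × Fin (2 * k ^ 2)}
    (h1 : p.1 = p'.1) (h2 : wt k M a b p = wt k M a b' p') : b = b' := by
  have e1 := wt_eq k M a b p
  have e2 := wt_eq k M a b' p'
  rw [h1, h2, e2] at e1
  have l1 := p.2.2
  have l2 := p'.2.2
  have d1 : (2 * k ^ 2 * ((b:ℕ) + M) + p.2) / (2 * k ^ 2) = b + M := by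
    rw [Nat.mul_add_div (by omega), Nat.div_eq_of_lt l1, add_zero]
  have d2 : (2 * k ^ 2 * ((b':ℕ) + M) + p'.2) / (2 * k ^ 2) = b' + M := by
    rw [Nat.mul_add_div (by omega), Nat.div_eq_of_lt l2, add_zero]
  rw [← e1] at d1
  ext
  omega

theorem iA_aux {k x y s : ℕ} (hx : x < k) (hs : s < k) (hy : y < k ^ 2) :
    (s + 2) * x ≤ y + k ^ 2 ∧ y + k ^ 2 - (s + 2) * x < 2 * k ^ 2 := by
  refine ⟨?_, by omega⟩
  have : (s + 2) * x ≤ (k + 1) * (k - 1) := Nat.mul_le_mul (by omega) (by omega)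
  have h2 : (k + 1) * (k - 1) ≤ k ^ 2 := by
    obtain ⟨j, rfl⟩ : ∃ j, k = j + 1 := ⟨k - 1, by omega⟩
    simp; nlinarith
  omega

def iA (k : ℕ) (g : Fin k × Fin (k ^ 2) × Fin k) : Fin (k + 2) × Fin (2 * k ^ 2) :=
  (⟨g.2.2 + 2, by omega⟩, ⟨g.2.1 + k ^ 2 - (g.2.2 + 2) * g.1, (iA_aux g.1.2 g.2.2.2 g.2.1.2).2⟩)

def vV (k : ℕ) (g : Fin k × Fin (k ^ 2)) : Fin (k + 2) × Fin (2 * k ^ 2) :=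
  ((0 : Fin (k + 2)), ⟨g.2 + k ^ 2, by omega⟩)

def vH (k : ℕ) (g : Fin k × Fin (k ^ 2)) : Fin (k + 2) × Fin (2 * k ^ 2) :=
  ((1 : Fin (k + 2)), ⟨g.2 + k ^ 2 - g.1, by omega⟩)

def sig (k : ℕ) (β : Fin k × Fin (k ^ 2) × Fin k → Bool) (m s t : ℕ) : ℝ :=
  if h : (2 ≤ s ∧ s < k + 2) ∧ (s * m + t) % (2 * k ^ 2) < k ^ 2 then
    (if β (⟨m % k, Nat.mod_lt _ (by omega)⟩, ⟨(s * m + t) % (2 * k ^ 2), h.2⟩, ⟨s - 2, by omega⟩) = true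
      then 1 else -1) else 0

theorem sig_abs (k β m s t) : |sig k β m s t| ≤ 1 := by
  unfold sig
  split_ifs <;> simp

theorem sig_zero (k β m s t) (h : s < 2) : sig k β m s t = 0 := by
  unfold sig
  rw [dif_neg]; omega

theorem sig_eq {k : ℕ} {β} {m s t : ℕ} (g : Fin k × Fin (k ^ 2) × Fin k) (hs : s = g.2.2 + 2)
    (hm : m % k = g.1) (ht : (s * m + t) % (2 * k ^ 2) = g.2.1) :
    sig k β m s t = if β g = true then 1 else -1 := by
  obtain ⟨x, y, z⟩ := g
  simp only at hs hm ht
  unfold sig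
  rw [dif_pos ⟨by omega, by omega⟩]
  have : ((⟨m % k, Nat.mod_lt _ (by omega)⟩, ⟨(s * m + t) % (2 * k ^ 2), by omega⟩, ⟨s - 2, by omega⟩) :
      Fin k × Fin (k ^ 2) × Fin k) = (x, y, z) := by
    refine Prod.ext (Fin.ext hm) (Prod.ext (Fin.ext ht) (Fin.ext ?_))
    simp only; omega
  rw [this]

theorem window_bad (k M : ℕ) (β : Fin k × Fin (k ^ 2) × Fin k → Bool)
    (hβ : ∀ (X : Fin (k + 2) × Fin (2 * k ^ 2) → Fin 4 → Fin 4 → ℝ)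
        (w : Fin k × Fin (k ^ 2) → Fin 2 → ℝ),
      ∃ g, ¬ TripleReal (β g) (X (iA k g)) (X (vV k (g.1, g.2.1))) (X (vH k (g.1, g.2.1)))
        (w (g.1, g.2.1)))
    (f : Fin (k + 2) × Fin (4 * k ^ 2 * M) → ℝ → ℝ) (hf : ∀ i, Continuous (f i))
    (hloc : ∀ m < k * M, ∀ tV tH : Fin (4 * k ^ 2 * M), (tV : ℕ) = tH + m →
        ∃ xVH ∈ Ioo ((m:ℝ) - 1 / 4) (m + 1 / 4), ∀ (s : Fin (k + 2)) (t : Fin (4 * k ^ 2 * M)),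
          2 ≤ (s : ℕ) → (tV : ℕ) = t + s * m →
          ∃ xAV ∈ Ioo ((m:ℝ) - 1 / 4) (m + 1 / 4), ∃ xAH ∈ Ioo ((m:ℝ) - 1 / 4) (m + 1 / 4),
            Crosses (f (s, t)) (f (0, tV)) xAV ∧ Crosses (f (s, t)) (f (1, tH)) xAH ∧
            (sig k β m s t = 1 → xAH < xAV ∧ xAV < xVH) ∧
            (sig k β m s t = -1 → xVH < xAV ∧ xAV < xAH))
    (h : Plane ≃ₜ Plane) (a b : Fin M) :
    ∃ p : Fin (k + 2) × Fin (2 * k ^ 2), Bad k h (f (p.1, wt k M a b p)) a := by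
  by_contra hcon
  push Not at hcon
  have hpar : ∀ p : Fin (k + 2) × Fin (2 * k ^ 2), ∃ X u, Param (Gam h (f (p.1, wt k M a b p)))
      ((k:ℝ) * (a:ℕ) - 1 / 4) ((k:ℝ) * (a:ℕ) + k - 1 / 2) X u := by
    intro p
    have hk : 0 < k := by
      rcases Nat.eq_zero_or_pos k with h | h
      · subst h; exact absurd p.2.2 (by simp)
      · exact h
    have hk' : (1:ℝ) ≤ k := by exact_mod_cast hk
    obtain ⟨c, hc, hz⟩ := not_not.1 (hcon p)
    exact exists_param (Gam_continuous h (hf _)) (Gam_injective h _) (by linarith) (by linarith) hc hz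
  choose X u hX using hpar
  have hm : ∀ g : Fin k × Fin (k ^ 2), k * (a:ℕ) + g.1 < k * M := by
    intro g
    have h1 : (a:ℕ) + 1 ≤ M := a.2
    have h2 := Nat.mul_le_mul_left k h1
    have h3 := g.1.2
    rw [Nat.mul_add] at h2
    omega
  have hV : ∀ g : Fin k × Fin (k ^ 2), (wt k M a b (vV k g) : ℕ) = 2 * k ^ 2 * (b + M) + g.2 := by
    intro g
    have := wt_eq k M a b (vV k g)
    simp only [vV, Fin.val_zero, zero_mul] at this ⊢
    omega
  have hVH : ∀ g : Fin k × Fin (k ^ 2),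
      (wt k M a b (vV k g) : ℕ) = wt k M a b (vH k g) + (k * (a:ℕ) + g.1) := by
    intro g
    rw [hV]
    have h1 := wt_eq k M a b (vH k g)
    have h3 := g.1.2
    have h4 : k ≤ k ^ 2 := Nat.le_self_pow (by norm_num) k
    simp only [vH, Fin.val_one, one_mul] at h1 ⊢
    omega
  have hloc' := fun g => hloc _ (hm g) _ _ (hVH g)
  choose xVH hxVH hA using hloc'
  obtain ⟨g, hg⟩ := hβ X (fun g => ![u (vV k g) (xVH g), u (vH k g) (xVH g)])
  apply hg
  obtain ⟨g1, hg1⟩ : ∃ g1 : Fin k × Fin (k ^ 2), g1 = (g.1, g.2.1) := ⟨_, rfl⟩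
  have hA1 : (wt k M a b (iA k g) : ℕ) + (g.2.2 + 2) * (k * (a:ℕ) + g.1)
      = 2 * k ^ 2 * (b + M) + g.2.1 := by
    have h1 := wt_eq k M a b (iA k g)
    have h2 := (iA_aux g.1.2 g.2.2.2 g.2.1.2).1
    simp only [iA] at h1 ⊢
    rw [Nat.mul_add]
    omega
  obtain ⟨xAV, h1, xAH, h2, c1, c2, o1, o2⟩ := hA (g.1, g.2.1) (iA k g).1 (wt k M a b (iA k g))
    (by simp [iA]) (by rw [hV, ← hA1]; simp [iA])
  have hsig := sig_eq (β := β) (m := k * (a:ℕ) + g.1) (s := (iA k g).1) (t := wt k M a b (iA k g)) g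
    rfl (by rw [Nat.mul_add_mod, Nat.mod_eq_of_lt g.1.2])
    (by
      have : ((iA k g).1 : ℕ) * (k * (a:ℕ) + g.1) + wt k M a b (iA k g)
          = 2 * k ^ 2 * (b + M) + g.2.1 := by
        rw [← hA1]; simp only [iA]; ring
      rw [this, Nat.mul_add_mod, Nat.mod_eq_of_lt (by omega)])
  have hsub : Ioo (((k * (a:ℕ) + g.1 : ℕ) : ℝ) - 1 / 4) (((k * (a:ℕ) + g.1 : ℕ) : ℝ) + 1 / 4) ⊆
      Ioo ((k:ℝ) * (a:ℕ) - 1 / 4) ((k:ℝ) * (a:ℕ) + k - 1 / 2) := by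
    have e1 : ((g.1:ℕ):ℝ) + 1 ≤ k := by exact_mod_cast g.1.2
    have e2 : (0:ℝ) ≤ (g.1:ℕ) := Nat.cast_nonneg _
    push_cast
    exact Ioo_subset_Ioo (by linarith) (by linarith)
  have eV : (vV k (g.1, g.2.1)).1 = 0 := rfl
  have eH : (vH k (g.1, g.2.1)).1 = 1 := rfl
  have pA := hX (iA k g)
  have pV := hX (vV k (g.1, g.2.1))
  have pH := hX (vH k (g.1, g.2.1))
  rw [eV] at pV
  rw [eH] at pH
  have q1 : β g = true → xAH < xAV ∧ xAV < xVH (g.1, g.2.1) := by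
    intro hb
    apply o1
    rw [hsig, if_pos hb]
  have q2 : β g = false → xVH (g.1, g.2.1) < xAV ∧ xAV < xAH := by
    intro hb
    apply o2
    rw [hsig, if_neg (by simp [hb])]
  have i1 := hsub h1
  have i2 := hsub h2
  have i3 := hsub (hxVH (g.1, g.2.1))
  clear hsub hsig o1 o2
  exact tripleReal h (hf _) (hf _) (hf _) i1 i2 i3 c1 c2 pA pV pH (β g) q1 q2

theorem final_aux (k : ℕ) (hk : k = 4096) (M : ℕ) (hM : 0 < M) :
    ∃ L : Fin ((k + 2) * (4 * k ^ 2 * M)) → Set Plane, IsArrangement L ∧ IsSimple L ∧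
      ∀ h : Plane ≃ₜ Plane, ∃ i, ∀ m, HasPieceDecomposition (h '' L i) m →
        (M:ℝ) / ((k + 2) * (4 * k ^ 2)) ≤ m := by
  have hk0 : 0 < k := by omega
  obtain ⟨β, hβ⟩ := exists_nonreal k hk (iA k) (fun g => vV k (g.1, g.2.1)) (fun g => vH k (g.1, g.2.1))
    (fun g => (g.1, g.2.1))
  obtain ⟨f, hf, hcr, hgen, hloc⟩ := exists_curves k (k * M) (4 * k ^ 2 * M) (by positivity)
    (by positivity) (sig k β) (sig_abs k β) (sig_zero k β)
  clear hk
  refine ⟨fun i => gr (f (finProdFinEquiv.symm i)), ?_, ?_, ?_⟩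
  · exact graph_arrangement (fun i => f (finProdFinEquiv.symm i)) (fun i => hf _)
      (fun i j hij => hcr _ _ (fun e => hij (finProdFinEquiv.symm.injective e)))
  · intro p i j l hi hj hl
    by_contra hcon
    push Not at hcon
    obtain ⟨n1, n2, n3⟩ := hcon
    have inj := (finProdFinEquiv (m := k + 2) (n := 4 * k ^ 2 * M)).symm.injective
    exact hgen _ _ _ (fun e => n1 (inj e)) (fun e => n2 (inj e)) (fun e => n3 (inj e)) (p 0)
      ⟨(mem_gr.1 hi).symm.trans (mem_gr.1 hj), (mem_gr.1 hi).symm.trans (mem_gr.1 hl)⟩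
  · intro h
    have hbad := fun w : Fin M × Fin M => window_bad k M β hβ f hf hloc h w.1 w.2
    choose p hp using hbad
    have hne : (Finset.univ : Finset (Fin (k + 2) × Fin (4 * k ^ 2 * M))).Nonempty :=
      ⟨(0, ⟨0, by positivity⟩), Finset.mem_univ _⟩
    have hMR : (0:ℝ) < M := by exact_mod_cast hM
    have hkR : (0:ℝ) < k := by exact_mod_cast hk0
    obtain ⟨i, -, hi⟩ := Finset.exists_le_card_fiber_of_nsmul_le_card_of_maps_to
      (s := (Finset.univ : Finset (Fin M × Fin M)))
      (f := fun w => ((p w).1, wt k M w.1 w.2 (p w)))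
      (b := (M:ℝ) / ((k + 2) * (4 * k ^ 2))) (fun w _ => Finset.mem_univ _) hne (by
        simp only [Finset.card_univ, Fintype.card_prod, Fintype.card_fin, nsmul_eq_mul]
        push_cast
        refine le_of_eq ?_
        field_simp)
    refine ⟨finProdFinEquiv i, fun m hm => hi.trans ?_⟩
    simp only [Equiv.symm_apply_apply] at hm
    obtain ⟨W, hW⟩ : ∃ W : Finset (Fin M × Fin M), W =
      Finset.univ.filter (fun w => ((p w).1, wt k M w.1 w.2 (p w)) = i) :=
      ⟨_, rfl⟩
    have hWm : ∀ w ∈ W, ((p w).1, wt k M w.1 w.2 (p w)) = i := by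
      intro w hw; rw [hW] at hw; simpa using hw
    have hcard : (W.image Prod.fst).card = W.card := by
      apply Finset.card_image_of_injOn
      rintro ⟨a, b⟩ hw ⟨a', b'⟩ hw' e
      have e' : a = a' := e
      subst e'
      have q1 := hWm _ hw
      have q2 := hWm _ hw'
      rw [← q2] at q1
      have q3 := Prod.ext_iff.1 q1
      exact Prod.ext rfl (wt_det q3.1 q3.2)
    have := charge hk0 h hm (W.image Prod.fst) (by
      intro a ha
      obtain ⟨w, hw, rfl⟩ := Finset.mem_image.1 ha
      have := hp w
      rw [hWm w hw] at this
      exact this)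
    rw [hcard, hW] at this
    exact_mod_cast this

/-- Theorem 4. There exist simple arrangements of `n` pseudolines
that, when represented by smooth piecewise-circular curves, require some curve to
consist of `Ω(n)` arcs. -/
theorem exists_arrangement_requiring_linear_arcs :
    ∃ c : ℝ, 0 < c ∧
      {n : ℕ | ∃ L : Fin n → Set Plane,
        IsArrangement L ∧ IsSimple L ∧
        ∀ h : Plane ≃ₜ Plane,
          (∀ i, IsC1Curve (h '' L i) ∧ ∃ m, HasPieceDecomposition (h '' L i) m) →
          ∃ i, ∀ m, HasPieceDecomposition (h '' L i) m → c * n ≤ (m : ℝ)}.Infinite := by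
  obtain ⟨k, hk⟩ : ∃ k : ℕ, k = 4096 := ⟨_, rfl⟩
  have hk0 : 0 < k := by omega
  have hkR : (0:ℝ) < k := by exact_mod_cast hk0
  refine ⟨1 / (((k:ℝ) + 2) * (4 * k ^ 2)) ^ 2, by positivity, ?_⟩
  refine Set.infinite_of_injective_forall_mem (f := fun M : ℕ => (k + 2) * (4 * k ^ 2 * (M + 1))) ?_ ?_
  · intro a b hab
    have h1 : (k + 2) * (4 * k ^ 2 * (a + 1)) = (k + 2) * (4 * k ^ 2 * (b + 1)) := hab
    have h2 := Nat.eq_of_mul_eq_mul_left (by positivity) h1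
    have h3 := Nat.eq_of_mul_eq_mul_left (by positivity) h2
    omega
  · intro M
    obtain ⟨L, h1, h2, h3⟩ := final_aux k hk (M + 1) (by omega)
    refine ⟨L, h1, h2, fun h _ => ?_⟩
    obtain ⟨i, hi⟩ := h3 h
    refine ⟨i, fun m hm => le_trans (le_of_eq ?_) (hi m hm)⟩
    push_cast
    field_simp
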